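/- arXiv:math/0610808 — 3 statements merged into one kernel-verified Lean document; each statement's English description precedes it below -/
import Mathlib

section
/- For every ψ ∈ L¹(Γ−, μ−) one has ∫_{Γ− \ Γ−∞} ψ(y) dμ−(y) = ∫_{Γ+ \ Γ+∞} ψ(Φ(z, −τ−(z))) dμ+(z). -/
/-!
Let `D = Ω₋ ∩ Ω₊` be the set of points whose curve leaves `Ω` in both time directions, and let
`e(x) = Φ(x, -τ₋(x))` be the entry point. Fix `w` on `ℝ^N`, measurable and `μ`-integrable with
`0 < w ≤ 1`, and let `H(y)` be the integral of `w` along the curve entering at `y`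
(`curveMass`). Since `e` is constant along curves, inserting `f = 1_D (k ∘ e) w` in the two
identities for `μ₋` and `μ₊` gives (`key_identity`)

`∫_{Γ₋ ∖ Γ₋∞} k H dμ₋ = ∫_D (k ∘ e) w dμ = ∫_{Γ₊ ∖ Γ₊∞} (k ∘ e) (H ∘ e) dμ₊`

whenever `f` is `μ`-integrable; the right-hand equality uses that the backward integral of `w` from
an outgoing point `z` is the forward one from `e(z)` (`curveMass_entry`).

The Bochner integrals over `Γ₋` and `Γ₊` carry no a priori integrability, so two cases arise.
If `μ(D) = 0`, every `f` supported in `D` is integrable, and `k = ψ / H` gives the claim at once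
(both sides are `0`). If `μ(D) > 0`, then `k = 1` yields a nonzero integral, so `H` and `H ∘ e` are
integrable; indicators `k = 1_B` show that `e` maps `(H ∘ e) μ₊` to `H μ₋`, and dividing by
`H > 0` gives the claim (`integral_eq_of_weighted`).
-/


open MeasureTheory Set Filter Topology
open scoped ENNReal NNReal

noncomputable section

/-- Forward exit time of the flow `Φ` from `Ω` (`∞` if the forward curve never leaves `Ω`). -/
def tauP {N : ℕ} (Ω : Set (Fin N → ℝ)) (Φ : (Fin N → ℝ) → ℝ → (Fin N → ℝ))
    (x : Fin N → ℝ) : ℝ≥0∞ :=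
  sInf {s : ℝ≥0∞ | ∃ r : ℝ, 0 < r ∧ s = ENNReal.ofReal r ∧ Φ x r ∉ Ω}

/-- Backward exit time of the flow `Φ` from `Ω`. -/
def tauM {N : ℕ} (Ω : Set (Fin N → ℝ)) (Φ : (Fin N → ℝ) → ℝ → (Fin N → ℝ))
    (x : Fin N → ℝ) : ℝ≥0∞ :=
  sInf {s : ℝ≥0∞ | ∃ r : ℝ, 0 < r ∧ s = ENNReal.ofReal r ∧ Φ x (-r) ∉ Ω}

/-- `∫_0^τ g(s) ds`, over `(0,∞)` when `τ = ∞`. -/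
def curveInt (g : ℝ → ℝ) (τ : ℝ≥0∞) : ℝ :=
  ∫ s in {s : ℝ | 0 < s ∧ ENNReal.ofReal s < τ}, g s

/-- The incoming part `Γ₋` of the boundary `∂Ω`. -/
def GammaM {N : ℕ} (Ω : Set (Fin N → ℝ)) (Φ : (Fin N → ℝ) → ℝ → (Fin N → ℝ)) :
    Set (Fin N → ℝ) :=
  {y ∈ frontier Ω | ∃ x ∈ Ω, tauM Ω Φ x < ⊤ ∧ y = Φ x (-(tauM Ω Φ x).toReal)}

/-- The outgoing part `Γ₊` of the boundary `∂Ω`. -/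
def GammaP {N : ℕ} (Ω : Set (Fin N → ℝ)) (Φ : (Fin N → ℝ) → ℝ → (Fin N → ℝ)) :
    Set (Fin N → ℝ) :=
  {y ∈ frontier Ω | ∃ x ∈ Ω, tauP Ω Φ x < ⊤ ∧ y = Φ x ((tauP Ω Φ x).toReal)}

/-- The boundary measures `μ∓` satisfy the integration-along-characteristics identities. -/
def IsBoundaryMeasures {N : ℕ} (Ω : Set (Fin N → ℝ)) (Φ : (Fin N → ℝ) → ℝ → (Fin N → ℝ))
    (μ μm μp : Measure (Fin N → ℝ)) : Prop :=
  ∀ f : (Fin N → ℝ) → ℝ, Integrable f (μ.restrict Ω) →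
    (∫ x in {x ∈ Ω | tauM Ω Φ x < ⊤}, f x ∂μ
        = ∫ y in GammaM Ω Φ, curveInt (fun s => f (Φ y s)) (tauP Ω Φ y) ∂μm) ∧
    (∫ x in {x ∈ Ω | tauP Ω Φ x < ⊤}, f x ∂μ
        = ∫ y in GammaP Ω Φ, curveInt (fun s => f (Φ y (-s))) (tauM Ω Φ y) ∂μp)

/-- The identities of Lemma `defmu+-` (beals1 and beals2). -/
def BealsProperty {N : ℕ} (Ω : Set (Fin N → ℝ)) (Φ : (Fin N → ℝ) → ℝ → (Fin N → ℝ))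
    (μ μm μp : Measure (Fin N → ℝ)) : Prop :=
  ∀ T : ℝ, 0 < T → ∀ f : ((Fin N → ℝ) × ℝ) → ℝ,
    Integrable f ((μ.restrict Ω).prod (volume.restrict (Ioo (0 : ℝ) T))) →
    (∫ p, f p ∂((μ.restrict Ω).prod (volume.restrict (Ioo (0 : ℝ) T)))
        = (∫ t in Ioo (0 : ℝ) T, (∫ y in GammaP Ω Φ,
            (∫ s in Ioo (0 : ℝ) ((tauM Ω Φ y ⊓ ENNReal.ofReal t).toReal),
              f (Φ y (-s), t - s)) ∂μp))
          + ∫ x in Ω, (∫ s in Ioo (0 : ℝ) ((tauM Ω Φ x ⊓ ENNReal.ofReal T).toReal),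
              f (Φ x (-s), T - s)) ∂μ)
    ∧ (∫ p, f p ∂((μ.restrict Ω).prod (volume.restrict (Ioo (0 : ℝ) T)))
        = (∫ t in Ioo (0 : ℝ) T, (∫ y in GammaM Ω Φ,
            (∫ s in Ioo (0 : ℝ) ((tauP Ω Φ y ⊓ ENNReal.ofReal (T - t)).toReal),
              f (Φ y s, t + s)) ∂μm))
          + ∫ x in Ω, (∫ s in Ioo (0 : ℝ) ((tauP Ω Φ x ⊓ ENNReal.ofReal T).toReal),
              f (Φ x s, s)) ∂μ)

/-- The class `𝔜` of test functions, together with the derivative `Dψ` along the flow. -/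
structure IsTestFun {N : ℕ} (Ω : Set (Fin N → ℝ)) (Φ : (Fin N → ℝ) → ℝ → (Fin N → ℝ))
    (ψ Dψ : (Fin N → ℝ) → ℝ) : Prop where
  measurable : Measurable ψ
  bounded : ∃ C, ∀ x, |ψ x| ≤ C
  compact_support : ∃ K : Set (Fin N → ℝ), IsCompact K ∧ K ⊆ Ω ∧ ∀ x ∉ K, ψ x = 0
  smooth : ∀ x ∈ Ω, ContDiffOn ℝ 1 (fun s => ψ (Φ x s))
      {s : ℝ | ENNReal.ofReal s < tauP Ω Φ x ∧ ENNReal.ofReal (-s) < tauM Ω Φ x}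
  hasDeriv : ∀ x ∈ Ω, HasDerivAt (fun s => ψ (Φ x s)) (Dψ x) 0
  measurableD : Measurable Dψ
  boundedD : ∃ C, ∀ x, |Dψ x| ≤ C

/-- `f ∈ D(T_max)` with `T_max f = g`. -/
def InDomTmax {N : ℕ} (Ω : Set (Fin N → ℝ)) (Φ : (Fin N → ℝ) → ℝ → (Fin N → ℝ))
    (μ : Measure (Fin N → ℝ)) (f g : (Fin N → ℝ) → ℝ) : Prop :=
  Integrable f (μ.restrict Ω) ∧ Integrable g (μ.restrict Ω) ∧
    ∀ ψ Dψ : (Fin N → ℝ) → ℝ, IsTestFun Ω Φ ψ Dψ →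
      ∫ x in Ω, g x * ψ x ∂μ = ∫ x in Ω, f x * Dψ x ∂μ

/-- A sequence of one-dimensional mollifiers supported in `[0, 1/n]`. -/
def IsMollifier (ρ : ℕ → ℝ → ℝ) : Prop :=
  ∀ n : ℕ, ContDiff ℝ (⊤ : ℕ∞) (ρ n) ∧ (∀ s, 0 ≤ ρ n s) ∧
    (∀ s, s ∉ Icc (0 : ℝ) (1 / (n + 1 : ℝ)) → ρ n s = 0) ∧ (∫ s, ρ n s) = 1

/-- Mollification along the characteristic curves. -/
def moll {N : ℕ} (Ω : Set (Fin N → ℝ)) (Φ : (Fin N → ℝ) → ℝ → (Fin N → ℝ))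
    (ρ : ℝ → ℝ) (f : (Fin N → ℝ) → ℝ) (x : Fin N → ℝ) : ℝ :=
  curveInt (fun s => ρ s * f (Φ x (-s))) (tauM Ω Φ x)

/-- The lifted flow `Ψ(ξ,s) = (Φ(ξ₁,s), ξ₂+s)` on `Ω × (0,T)`. -/
def lflow {N : ℕ} (Φ : (Fin N → ℝ) → ℝ → (Fin N → ℝ)) (ξ : (Fin N → ℝ) × ℝ) (s : ℝ) :
    (Fin N → ℝ) × ℝ := (Φ ξ.1 s, ξ.2 + s)

/-- Forward exit time `ℓ₊` of the lifted flow. -/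
def ellP {N : ℕ} (Ω : Set (Fin N → ℝ)) (Φ : (Fin N → ℝ) → ℝ → (Fin N → ℝ)) (T : ℝ)
    (ξ : (Fin N → ℝ) × ℝ) : ℝ≥0∞ := tauP Ω Φ ξ.1 ⊓ ENNReal.ofReal (T - ξ.2)

/-- Backward exit time `ℓ₋` of the lifted flow. -/
def ellM {N : ℕ} (Ω : Set (Fin N → ℝ)) (Φ : (Fin N → ℝ) → ℝ → (Fin N → ℝ))
    (ξ : (Fin N → ℝ) × ℝ) : ℝ≥0∞ := tauM Ω Φ ξ.1 ⊓ ENNReal.ofReal ξ.2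

/-- The incoming part `Σ₋,T` of the boundary of `Ω × (0,T)`. -/
def SigmaM {N : ℕ} (Ω : Set (Fin N → ℝ)) (Φ : (Fin N → ℝ) → ℝ → (Fin N → ℝ)) (T : ℝ) :
    Set ((Fin N → ℝ) × ℝ) :=
  {ζ ∈ frontier (Ω ×ˢ Ioo (0 : ℝ) T) |
    ∃ ξ ∈ Ω ×ˢ Ioo (0 : ℝ) T, ζ = lflow Φ ξ (-(ellM Ω Φ ξ).toReal)}

/-- The outgoing part `Σ₊,T` of the boundary of `Ω × (0,T)`. -/
def SigmaP {N : ℕ} (Ω : Set (Fin N → ℝ)) (Φ : (Fin N → ℝ) → ℝ → (Fin N → ℝ)) (T : ℝ) :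
    Set ((Fin N → ℝ) × ℝ) :=
  {ζ ∈ frontier (Ω ×ˢ Ioo (0 : ℝ) T) |
    ∃ ξ ∈ Ω ×ˢ Ioo (0 : ℝ) T, ζ = lflow Φ ξ ((ellP Ω Φ T ξ).toReal)}

/-- The semigroup `U₀(t)` with no re-entry boundary conditions. -/
def U0 {N : ℕ} (Ω : Set (Fin N → ℝ)) (Φ : (Fin N → ℝ) → ℝ → (Fin N → ℝ)) (t : ℝ)
    (f : (Fin N → ℝ) → ℝ) (x : Fin N → ℝ) : ℝ :=
  if ENNReal.ofReal t < tauM Ω Φ x then f (Φ x (-t)) else 0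

/-- `x ↦ ∫_0^{τ₋(x)} e^{-λ t} g(Φ(x,-t)) dt`. -/
def resolv {N : ℕ} (Ω : Set (Fin N → ℝ)) (Φ : (Fin N → ℝ) → ℝ → (Fin N → ℝ)) (lam : ℝ)
    (g : (Fin N → ℝ) → ℝ) (x : Fin N → ℝ) : ℝ :=
  curveInt (fun t => Real.exp (-(lam * t)) * g (Φ x (-t))) (tauM Ω Φ x)

/-- The candidate solution of the boundary value problem `(λ - T_max) f = g`, `B⁻ f = u`. -/
def bvpSol {N : ℕ} (Ω : Set (Fin N → ℝ)) (Φ : (Fin N → ℝ) → ℝ → (Fin N → ℝ)) (lam : ℝ)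
    (g u : (Fin N → ℝ) → ℝ) (x : Fin N → ℝ) : ℝ :=
  resolv Ω Φ lam g x +
    (if tauM Ω Φ x < ⊤ then
      Real.exp (-(lam * (tauM Ω Φ x).toReal)) * u (Φ x (-(tauM Ω Φ x).toReal)) else 0)

/-- `f` has incoming trace `u` on `Γ₋`, via an absolutely continuous representative
(along the characteristics, with derivative `-g`). -/
def IsTraceM {N : ℕ} (Ω : Set (Fin N → ℝ)) (Φ : (Fin N → ℝ) → ℝ → (Fin N → ℝ))
    (μ μm : Measure (Fin N → ℝ)) (f g u : (Fin N → ℝ) → ℝ) : Prop :=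
  ∃ fs : (Fin N → ℝ) → ℝ, fs =ᵐ[μ.restrict Ω] f ∧
    (∀ᵐ x ∂μ.restrict Ω, ∀ t₁ t₂ : ℝ, t₁ ≤ t₂ →
      ENNReal.ofReal (-t₁) < tauM Ω Φ x → ENNReal.ofReal t₂ < tauP Ω Φ x →
      fs (Φ x t₁) - fs (Φ x t₂) = ∫ s in t₁..t₂, g (Φ x s)) ∧
    ∀ᵐ y ∂μm.restrict (GammaM Ω Φ),
      Tendsto (fun t => fs (Φ y t)) (𝓝[>] (0 : ℝ)) (𝓝 (u y))

/-- `f` has outgoing trace `w` on `Γ₊`. -/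
def IsTraceP {N : ℕ} (Ω : Set (Fin N → ℝ)) (Φ : (Fin N → ℝ) → ℝ → (Fin N → ℝ))
    (μ μp : Measure (Fin N → ℝ)) (f g w : (Fin N → ℝ) → ℝ) : Prop :=
  ∃ fs : (Fin N → ℝ) → ℝ, fs =ᵐ[μ.restrict Ω] f ∧
    (∀ᵐ x ∂μ.restrict Ω, ∀ t₁ t₂ : ℝ, t₁ ≤ t₂ →
      ENNReal.ofReal (-t₁) < tauM Ω Φ x → ENNReal.ofReal t₂ < tauP Ω Φ x →
      fs (Φ x t₁) - fs (Φ x t₂) = ∫ s in t₁..t₂, g (Φ x s)) ∧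
    ∀ᵐ y ∂μp.restrict (GammaP Ω Φ),
      Tendsto (fun t => fs (Φ y (-t))) (𝓝[>] (0 : ℝ)) (𝓝 (w y))

/-! ### The flow -/

/-- A jointly continuous one-parameter group of transformations. -/
structure IsFlow {N : ℕ} (Φ : (Fin N → ℝ) → ℝ → (Fin N → ℝ)) : Prop where
  cont : Continuous (fun p : (Fin N → ℝ) × ℝ => Φ p.1 p.2)
  zero : ∀ x, Φ x 0 = x
  add : ∀ x s t, Φ (Φ x s) t = Φ x (s + t)

/-- Gronwall's estimate, for nonnegative times. -/
lemma dist_flow_le_of_nonneg {N : ℕ} {κ : ℝ≥0}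
    {F : (Fin N → ℝ) → (Fin N → ℝ)} (hF : LipschitzWith κ F)
    {Φ : (Fin N → ℝ) → ℝ → (Fin N → ℝ)} (hΦ0 : ∀ x, Φ x 0 = x)
    (hΦ' : ∀ x s, HasDerivAt (Φ x) (F (Φ x s)) s)
    (x y : Fin N → ℝ) {s : ℝ} (hs : 0 ≤ s) :
    dist (Φ x s) (Φ y s) ≤ dist x y * Real.exp (κ * s) := by
  have h := dist_le_of_trajectories_ODE (v := fun _ => F) (K := κ) (f := Φ x) (g := Φ y)
    (a := 0) (b := s) (δ := dist x y) (fun _ => hF)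
    (fun t _ => (hΦ' x t).continuousAt.continuousWithinAt)
    (fun t _ => (hΦ' x t).hasDerivWithinAt)
    (fun t _ => (hΦ' y t).continuousAt.continuousWithinAt)
    (fun t _ => (hΦ' y t).hasDerivWithinAt)
    (by simp [hΦ0]) s ⟨hs, le_rfl⟩
  simpa using h

/-- The flow of a globally Lipschitz field is a continuous one-parameter group: the group law is
uniqueness for the Cauchy problem, continuity is Gronwall's estimate. -/
lemma isFlow_of_lipschitz {N : ℕ} {κ : ℝ≥0}
    {F : (Fin N → ℝ) → (Fin N → ℝ)} (hF : LipschitzWith κ F)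
    {Φ : (Fin N → ℝ) → ℝ → (Fin N → ℝ)} (hΦ0 : ∀ x, Φ x 0 = x)
    (hΦ' : ∀ x s, HasDerivAt (Φ x) (F (Φ x s)) s) : IsFlow Φ := by
  have hbound : ∀ x y s, dist (Φ x s) (Φ y s) ≤ dist x y * Real.exp (κ * |s|) := by
    intro x y s
    rcases le_total 0 s with hs | hs
    · rw [abs_of_nonneg hs]; exact dist_flow_le_of_nonneg hF hΦ0 hΦ' x y hs
    · have hneg := hF.neg
      -- The reversed trajectories solve the equation with the opposite field.
      have h := dist_flow_le_of_nonneg (κ := κ) (F := fun z => -F z)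
        (Φ := fun z t => Φ z (-t)) hneg (by simpa using hΦ0)
        (fun z t => by
          have := (hΦ' z (-t)).scomp t (hasDerivAt_neg t)
          simpa [Function.comp_def] using this) x y (neg_nonneg.2 hs)
      rw [abs_of_nonpos hs]; simpa using h
  refine ⟨?_, hΦ0, ?_⟩
  · rw [continuous_iff_continuousAt]
    rintro ⟨x, s⟩
    have h2 : Tendsto (fun p : (Fin N → ℝ) × ℝ =>
        dist p.1 x * Real.exp (κ * |p.2|) + dist (Φ x p.2) (Φ x s)) (𝓝 (x, s)) (𝓝 0) := by
      have hc : Continuous (Φ x) := continuous_iff_continuousAt.2 fun t => (hΦ' x t).continuousAt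
      have : Continuous (fun p : (Fin N → ℝ) × ℝ =>
        dist p.1 x * Real.exp (κ * |p.2|) + dist (Φ x p.2) (Φ x s)) := by fun_prop
      simpa using this.tendsto (x, s)
    exact tendsto_iff_dist_tendsto_zero.2 <|
      squeeze_zero (fun _ => dist_nonneg)
      (fun p => (dist_triangle _ (Φ x p.2) _).trans (add_le_add_left (hbound _ _ _) _)) h2
  · intro x s t
    have h := ODE_solution_unique_univ (v := fun _ => F) (s := fun _ => univ) (K := κ)
      (f := Φ (Φ x s)) (g := fun t => Φ x (s + t)) (t₀ := 0)
      (fun _ => hF.lipschitzOnWith) (fun t => ⟨hΦ' _ t, trivial⟩)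
      (fun t => ⟨(hΦ' x (s + t)).comp_const_add s t, trivial⟩) (by simp [hΦ0])
    exact congrFun h t

/-- The time-reversed flow. -/
def rev {N : ℕ} (Φ : (Fin N → ℝ) → ℝ → (Fin N → ℝ)) : (Fin N → ℝ) → ℝ → (Fin N → ℝ) :=
  fun x s => Φ x (-s)

lemma IsFlow.rev {N : ℕ} {Φ : (Fin N → ℝ) → ℝ → (Fin N → ℝ)} (h : IsFlow Φ) :
    IsFlow (rev Φ) where
  cont := h.cont.comp (continuous_fst.prodMk continuous_snd.neg)
  zero x := by simp [_root_.rev, h.zero]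
  add x s t := by simp [_root_.rev, h.add, add_comm]

lemma rev_rev {N : ℕ} (Φ : (Fin N → ℝ) → ℝ → (Fin N → ℝ)) : rev (rev Φ) = Φ := by
  funext x s; simp [rev]

lemma tauP_rev {N : ℕ} (Ω : Set (Fin N → ℝ)) (Φ : (Fin N → ℝ) → ℝ → (Fin N → ℝ)) :
    tauP Ω (rev Φ) = tauM Ω Φ := rfl

lemma tauM_rev {N : ℕ} (Ω : Set (Fin N → ℝ)) (Φ : (Fin N → ℝ) → ℝ → (Fin N → ℝ)) :
    tauM Ω (rev Φ) = tauP Ω Φ := by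
  funext x; simp [tauM, tauP, rev]

lemma GammaM_rev {N : ℕ} (Ω : Set (Fin N → ℝ)) (Φ : (Fin N → ℝ) → ℝ → (Fin N → ℝ)) :
    GammaM Ω (rev Φ) = GammaP Ω Φ := by
  simp only [GammaM, GammaP, tauM_rev]; simp [rev]

/-! ### Exit times -/

section
variable {N : ℕ} {Ω : Set (Fin N → ℝ)} {Φ : (Fin N → ℝ) → ℝ → (Fin N → ℝ)}

lemma tauP_lt_iff {x : Fin N → ℝ} {a : ℝ≥0∞} :
    tauP Ω Φ x < a ↔ ∃ r : ℝ, 0 < r ∧ ENNReal.ofReal r < a ∧ Φ x r ∉ Ω := by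
  unfold tauP
  rw [sInf_lt_iff]
  constructor
  · rintro ⟨s, ⟨r, hr, rfl, h⟩, hs⟩; exact ⟨r, hr, hs, h⟩
  · rintro ⟨r, hr, hs, h⟩; exact ⟨_, ⟨r, hr, rfl, h⟩, hs⟩

lemma tauP_le {x : Fin N → ℝ} {r : ℝ} (hr : 0 < r) (h : Φ x r ∉ Ω) :
    tauP Ω Φ x ≤ ENNReal.ofReal r := sInf_le ⟨r, hr, rfl, h⟩

lemma mem_of_lt_tauP {x : Fin N → ℝ} {r : ℝ} (hr : 0 < r) (h : ENNReal.ofReal r < tauP Ω Φ x) :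
    Φ x r ∈ Ω := by
  by_contra hc
  exact absurd h (not_lt.2 (tauP_le hr hc))

lemma le_tauP {x : Fin N → ℝ} {T : ℝ} (hin : ∀ s, 0 < s → s < T → Φ x s ∈ Ω) :
    ENNReal.ofReal T ≤ tauP Ω Φ x := by
  by_contra! hc
  obtain ⟨r, hr, hrT, h⟩ := tauP_lt_iff.1 hc
  exact h (hin r hr (ENNReal.ofReal_lt_ofReal_iff_of_nonneg hr.le |>.1 hrT))

lemma tauP_eq {x : Fin N → ℝ} {T : ℝ} (hT : 0 < T) (hin : ∀ s, 0 < s → s < T → Φ x s ∈ Ω)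
    (hout : Φ x T ∉ Ω) : tauP Ω Φ x = ENNReal.ofReal T :=
  le_antisymm (tauP_le hT hout) (le_tauP hin)

lemma tauM_eq {x : Fin N → ℝ} {T : ℝ} (hT : 0 < T) (hin : ∀ s, 0 < s → s < T → Φ x (-s) ∈ Ω)
    (hout : Φ x (-T) ∉ Ω) : tauM Ω Φ x = ENNReal.ofReal T :=
  tauP_eq (Φ := rev Φ) hT hin hout

/-- The curve has left `Ω` at the exit time, because the complement of `Ω` is closed. -/
lemma exit_notMem (hf : IsFlow Φ) (hΩ : IsOpen Ω) {x : Fin N → ℝ} (hfin : tauP Ω Φ x < ⊤)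
    (hpos : 0 < tauP Ω Φ x) : Φ x (tauP Ω Φ x).toReal ∉ Ω := by
  intro hmem
  set T := (tauP Ω Φ x).toReal with hTdef
  have hT : tauP Ω Φ x = ENNReal.ofReal T := (ENNReal.ofReal_toReal hfin.ne).symm
  have hT0 : 0 < T := ENNReal.toReal_pos hpos.ne' hfin.ne
  have hc : Continuous (Φ x) := hf.cont.comp (continuous_const.prodMk continuous_id)
  obtain ⟨ε, hε, hb⟩ := Metric.isOpen_iff.1 (hΩ.preimage hc) T hmem
  have : ENNReal.ofReal (T + ε) ≤ tauP Ω Φ x := le_tauP fun s hs hs' => by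
    rcases lt_or_ge s T with h | h
    · exact mem_of_lt_tauP hs (by rw [hT]; exact (ENNReal.ofReal_lt_ofReal_iff hT0).2 h)
    · exact hb (by rw [Metric.mem_ball, Real.dist_eq, abs_of_nonneg (by linarith)]; linarith)
  rw [hT, ENNReal.ofReal_le_ofReal_iff hT0.le] at this
  linarith

/-- `Γ₋` consists of the boundary points from which the flow enters `Ω` immediately. -/
lemma GammaM_eq (hf : IsFlow Φ) (hΩ : IsOpen Ω) :
    GammaM Ω Φ = frontier Ω ∩ {y | 0 < tauP Ω Φ y} := by
  ext y
  constructor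
  · rintro ⟨hy, x, hx, hfin, rfl⟩
    refine ⟨hy, ?_⟩
    set T := (tauM Ω Φ x).toReal with hTdef
    have hT : tauP Ω (rev Φ) x = ENNReal.ofReal T := (ENNReal.ofReal_toReal hfin.ne).symm
    have hT0 : 0 < T := by
      rcases (ENNReal.toReal_nonneg : 0 ≤ T).eq_or_lt with h | h
      · rw [show T = 0 from h.symm, neg_zero, hf.zero, hΩ.frontier_eq] at hy
        exact absurd hx hy.2
      · exact h
    refine lt_of_lt_of_le (ENNReal.ofReal_pos.2 hT0) (le_tauP (T := T) fun s hs hs' => ?_)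
    rw [hf.add]
    have : Φ x (-(T - s)) ∈ Ω := mem_of_lt_tauP (Φ := rev Φ) (by linarith)
      (by rw [hT, ENNReal.ofReal_lt_ofReal_iff hT0]; linarith)
    convert this using 2
    ring
  · rintro ⟨hy, hpos⟩
    refine ⟨hy, ?_⟩
    obtain ⟨r, hr0, hr⟩ := ENNReal.lt_iff_exists_real_btwn.1 hpos
    have hr' : 0 < r := ENNReal.ofReal_pos.1 hr.1
    have hτ : tauM Ω Φ (Φ y r) = ENNReal.ofReal r := by
      refine tauM_eq hr' (fun s hs hsr => ?_) ?_
      · rw [hf.add]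
        exact mem_of_lt_tauP (by linarith) (lt_of_le_of_lt
          (ENNReal.ofReal_le_ofReal (by linarith)) hr.2)
      · rw [hf.add, add_neg_cancel, hf.zero]
        rw [hΩ.frontier_eq] at hy; exact hy.2
    refine ⟨Φ y r, mem_of_lt_tauP hr' hr.2, by simp [hτ], ?_⟩
    rw [hτ, ENNReal.toReal_ofReal hr'.le, hf.add, add_neg_cancel, hf.zero]

lemma GammaM_notMem (hΩ : IsOpen Ω) {y : Fin N → ℝ} (hy : y ∈ GammaM Ω Φ) : y ∉ Ω := by
  have := hy.1
  rw [hΩ.frontier_eq] at this; exact this.2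

lemma tauM_along (hf : IsFlow Φ) {y : Fin N → ℝ} (hy : y ∉ Ω) {s : ℝ} (hs : 0 < s)
    (hs' : ENNReal.ofReal s < tauP Ω Φ y) : tauM Ω Φ (Φ y s) = ENNReal.ofReal s := by
  refine tauM_eq hs (fun r hr hrs => ?_) ?_
  · rw [hf.add]
    exact mem_of_lt_tauP (by linarith) (lt_of_le_of_lt
      (ENNReal.ofReal_le_ofReal (by linarith)) hs')
  · rwa [hf.add, add_neg_cancel, hf.zero]

lemma tauP_along_lt_top (hf : IsFlow Φ) {y : Fin N → ℝ} {s : ℝ} (hs : 0 < s)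
    (hs' : ENNReal.ofReal s < tauP Ω Φ y) : tauP Ω Φ (Φ y s) < ⊤ ↔ tauP Ω Φ y < ⊤ := by
  constructor
  · intro h
    obtain ⟨r, hr, -, hout⟩ := tauP_lt_iff.1 h
    rw [hf.add] at hout
    exact tauP_lt_iff.2 ⟨s + r, by linarith, by simp, hout⟩
  · intro h
    obtain ⟨r, hr, -, hout⟩ := tauP_lt_iff.1 h
    have hsr : s < r := (ENNReal.ofReal_lt_ofReal_iff hr).1 (hs'.trans_le (tauP_le hr hout))
    exact tauP_lt_iff.2 ⟨r - s, by linarith, by simp, by rw [hf.add]; simpa using hout⟩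

/-- `tauP < a` means that the orbit meets the closed set `Ωᶜ` at a time in one of countably many
compact intervals, hence defines an `F_σ`. -/
lemma measurable_tauP (hf : IsFlow Φ) (hΩ : IsOpen Ω) : Measurable (tauP Ω Φ) := by
  refine measurable_of_Iio fun a => ?_
  have : tauP Ω Φ ⁻¹' Iio a =
      ⋃ (p : ℚ) (q : ℚ) (_ : 0 < (p : ℝ) ∧ ENNReal.ofReal q < a),
        {x | ∀ r ∈ Icc (p : ℝ) q, Φ x r ∈ Ω}ᶜ := by
    ext x
    simp only [mem_preimage, mem_Iio, tauP_lt_iff, mem_iUnion, mem_compl_iff, mem_ofPred_eq,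
      not_forall, exists_prop]
    constructor
    · rintro ⟨r, hr, hra, hout⟩
      obtain ⟨p, hp0, hpr⟩ := exists_rat_btwn hr
      obtain ⟨b, hrb, hba⟩ := ENNReal.lt_iff_exists_real_btwn.1 hra |>.imp fun _ h => h.2
      have hrb' : r < b := (ENNReal.ofReal_lt_ofReal_iff_of_nonneg hr.le).1 hrb
      obtain ⟨q, hrq, hqb⟩ := exists_rat_btwn hrb'
      exact ⟨p, q, ⟨hp0, (ENNReal.ofReal_le_ofReal hqb.le).trans_lt hba⟩, r,
        ⟨hpr.le, hrq.le⟩, hout⟩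
    · rintro ⟨p, q, ⟨hp, hq⟩, r, ⟨hpr, hrq⟩, hout⟩
      exact ⟨r, hp.trans_le hpr, (ENNReal.ofReal_le_ofReal hrq).trans_lt hq, hout⟩
  rw [this]
  refine .iUnion fun p => .iUnion fun q => .iUnion fun _ => (IsOpen.measurableSet ?_).compl
  refine isOpen_iff_mem_nhds.2 fun x hx => ?_
  exact isCompact_Icc.eventually_forall_of_forall_eventually
    fun r hr => hf.cont.continuousAt (hΩ.mem_nhds (hx r hr))

lemma measurable_tauM (hf : IsFlow Φ) (hΩ : IsOpen Ω) : Measurable (tauM Ω Φ) :=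
  measurable_tauP hf.rev hΩ

lemma measurableSet_GammaM (hf : IsFlow Φ) (hΩ : IsOpen Ω) : MeasurableSet (GammaM Ω Φ) := by
  rw [GammaM_eq hf hΩ]
  exact isClosed_frontier.measurableSet.inter (measurable_tauP hf hΩ measurableSet_Ioi)

end

/-! ### Entry points and integrals along curves -/

section
variable {N : ℕ} {Ω : Set (Fin N → ℝ)} {Φ : (Fin N → ℝ) → ℝ → (Fin N → ℝ)}

/-- The point `Φ(x, -τ₋(x))` at which the curve through `x` enters `Ω`
(it is `x` itself when `τ₋(x) = ∞`, as `(⊤ : ℝ≥0∞).toReal = 0`). -/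
def entry (Ω : Set (Fin N → ℝ)) (Φ : (Fin N → ℝ) → ℝ → (Fin N → ℝ)) (x : Fin N → ℝ) :
    Fin N → ℝ := Φ x (-(tauM Ω Φ x).toReal)

/-- The set `Ω₋ ∩ Ω₊` of points whose curve leaves `Ω` in both time directions. -/
def finSet (Ω : Set (Fin N → ℝ)) (Φ : (Fin N → ℝ) → ℝ → (Fin N → ℝ)) : Set (Fin N → ℝ) :=
  {x ∈ Ω | tauM Ω Φ x < ⊤ ∧ tauP Ω Φ x < ⊤}

/-- The integral of `w` along the curve entering `Ω` at `y`. -/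
def curveMass (Ω : Set (Fin N → ℝ)) (Φ : (Fin N → ℝ) → ℝ → (Fin N → ℝ))
    (w : (Fin N → ℝ) → ℝ) (y : Fin N → ℝ) : ℝ :=
  curveInt (fun s => w (Φ y s)) (tauP Ω Φ y)

lemma measurable_entry (hf : IsFlow Φ) (hΩ : IsOpen Ω) : Measurable (entry Ω Φ) :=
  hf.cont.measurable.comp (measurable_id.prodMk (measurable_tauM hf hΩ).ennreal_toReal.neg)

lemma measurableSet_finSet (hf : IsFlow Φ) (hΩ : IsOpen Ω) : MeasurableSet (finSet Ω Φ) :=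
  hΩ.measurableSet.inter <| (measurable_tauM hf hΩ measurableSet_Iio).inter
    (measurable_tauP hf hΩ measurableSet_Iio)

lemma measurable_curveMass (hf : IsFlow Φ) (hΩ : IsOpen Ω) {w : (Fin N → ℝ) → ℝ}
    (hw : Measurable w) : Measurable (curveMass Ω Φ w) := by
  have hS : MeasurableSet {p : (Fin N → ℝ) × ℝ | 0 < p.2 ∧ ENNReal.ofReal p.2 < tauP Ω Φ p.1} :=
    (measurable_snd measurableSet_Ioi).inter
      (measurableSet_lt (ENNReal.measurable_ofReal.comp measurable_snd)
        ((measurable_tauP hf hΩ).comp measurable_fst))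
  have h := StronglyMeasurable.integral_prod_right' (ν := (volume : Measure ℝ))
    (((hw.comp hf.cont.measurable).indicator hS).stronglyMeasurable)
  convert h.measurable using 1
  funext y
  unfold curveMass curveInt
  rw [← integral_indicator]
  · rfl
  · exact measurableSet_Ioi.inter (measurableSet_lt ENNReal.measurable_ofReal measurable_const)

lemma curveInt_congr {g h : ℝ → ℝ} {τ : ℝ≥0∞}
    (H : ∀ s, 0 < s → ENNReal.ofReal s < τ → g s = h s) : curveInt g τ = curveInt h τ :=
  setIntegral_congr_fun
    (measurableSet_Ioi.inter (measurableSet_lt ENNReal.measurable_ofReal measurable_const))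
    fun s hs => H s hs.1 hs.2

lemma curveInt_ofReal (g : ℝ → ℝ) {T : ℝ} (hT : 0 ≤ T) :
    curveInt g (ENNReal.ofReal T) = ∫ s in (0 : ℝ)..T, g s := by
  rw [intervalIntegral.integral_of_le hT, integral_Ioc_eq_integral_Ioo]
  unfold curveInt
  congr 2
  ext s
  simp only [mem_ofPred_eq, mem_Ioo, and_congr_right_iff]
  exact fun hs => ENNReal.ofReal_lt_ofReal_iff_of_nonneg hs.le

lemma curveMass_pos (hf : IsFlow Φ) {w : (Fin N → ℝ) → ℝ}
    (hw : Measurable w) (hw0 : ∀ x, 0 < w x) (hw1 : ∀ x, w x ≤ 1) {y : Fin N → ℝ}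
    (hfin : tauP Ω Φ y < ⊤) (hpos : 0 < tauP Ω Φ y) : 0 < curveMass Ω Φ w y := by
  have hT0 : 0 < (tauP Ω Φ y).toReal := ENNReal.toReal_pos hpos.ne' hfin.ne
  unfold curveMass
  rw [← ENNReal.ofReal_toReal hfin.ne, curveInt_ofReal _ hT0.le]
  refine intervalIntegral.intervalIntegral_pos_of_pos ?_ (fun s => hw0 _) hT0
  have hm : Measurable fun s => w (Φ y s) :=
    hw.comp (hf.cont.comp (continuous_const.prodMk continuous_id)).measurable
  refine (intervalIntegrable_const (c := (1 : ℝ))).mono_fun hm.aestronglyMeasurable ?_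
  exact Eventually.of_forall fun s => by
    simpa [abs_of_pos (hw0 _)] using hw1 _

/-- The entry point of an outgoing boundary point lies outside `Ω`, and the transit time is the same
from both ends of the curve. -/
lemma entry_of_GammaP (hf : IsFlow Φ) (hΩ : IsOpen Ω) {z : Fin N → ℝ} (hz : z ∈ GammaP Ω Φ)
    (hfin : tauM Ω Φ z < ⊤) :
    0 < (tauM Ω Φ z).toReal ∧ entry Ω Φ z ∉ Ω ∧ tauP Ω Φ (entry Ω Φ z) = tauM Ω Φ z := by
  rw [← GammaM_rev] at hz
  have hpos : 0 < tauM Ω Φ z := ((GammaM_eq hf.rev hΩ).subset hz).2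
  have hT0 : 0 < (tauM Ω Φ z).toReal := ENNReal.toReal_pos hpos.ne' hfin.ne
  refine ⟨hT0, exit_notMem hf.rev hΩ hfin hpos, ?_⟩
  conv_rhs => rw [← ENNReal.ofReal_toReal hfin.ne]
  refine tauP_eq hT0 (fun s hs hsT => ?_) ?_
  · unfold entry
    rw [hf.add]
    have : Φ z (-((tauM Ω Φ z).toReal - s)) ∈ Ω := mem_of_lt_tauP (Φ := rev Φ) (by linarith) (by
      change _ < tauM Ω Φ z
      rw [← ENNReal.ofReal_toReal hfin.ne, ENNReal.ofReal_lt_ofReal_iff hT0,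
        ENNReal.toReal_ofReal hT0.le]; linarith)
    convert this using 2
    ring
  · unfold entry
    rw [hf.add, neg_add_cancel, hf.zero]
    exact GammaM_notMem hΩ hz

lemma curveMass_entry (hf : IsFlow Φ) (hΩ : IsOpen Ω) (w : (Fin N → ℝ) → ℝ) {z : Fin N → ℝ}
    (hz : z ∈ GammaP Ω Φ) (hfin : tauM Ω Φ z < ⊤) :
    curveInt (fun s => w (Φ z (-s))) (tauM Ω Φ z) = curveMass Ω Φ w (entry Ω Φ z) := by
  obtain ⟨hT0, -, hτ⟩ := entry_of_GammaP hf hΩ hz hfin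
  unfold curveMass
  rw [hτ]
  have hT := (ENNReal.ofReal_toReal hfin.ne).symm
  unfold entry
  set T := (tauM Ω Φ z).toReal
  rw [hT, curveInt_ofReal _ hT0.le, curveInt_ofReal _ hT0.le]
  have := intervalIntegral.integral_comp_sub_left (a := 0) (b := T)
    (fun s => w (Φ z (-s))) T
  simp only [sub_self, sub_zero] at this
  rw [← this]
  refine intervalIntegral.integral_congr fun s _ => ?_
  simp only [hf.add]
  congr 2
  ring

lemma curveInt_const_mul (c : ℝ) (g : ℝ → ℝ) (τ : ℝ≥0∞) :
    curveInt (fun s => c * g s) τ = c * curveInt g τ := integral_const_mul _ _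

lemma curveInt_forward (hf : IsFlow Φ) (hΩ : IsOpen Ω) (k w : (Fin N → ℝ) → ℝ) {y : Fin N → ℝ}
    (hy : y ∈ GammaM Ω Φ) :
    curveInt (fun s => (finSet Ω Φ).indicator (fun x => k (entry Ω Φ x) * w x) (Φ y s))
        (tauP Ω Φ y)
      = {y | tauP Ω Φ y < ⊤}.indicator (fun y => k y * curveMass Ω Φ w y) y := by
  have hyΩ := GammaM_notMem hΩ hy
  by_cases hfin : tauP Ω Φ y < ⊤
  · rw [indicator_of_mem (by exact hfin), curveMass, ← curveInt_const_mul]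
    refine curveInt_congr fun s hs hs' => ?_
    have hτ := tauM_along hf hyΩ hs hs'
    have hmem : Φ y s ∈ finSet Ω Φ := ⟨mem_of_lt_tauP hs hs', by simp [hτ],
      (tauP_along_lt_top hf hs hs').2 hfin⟩
    rw [indicator_of_mem hmem, entry, hτ, ENNReal.toReal_ofReal hs.le, hf.add, add_neg_cancel,
      hf.zero]
  · rw [indicator_of_notMem (by exact hfin)]
    rw [curveInt_congr (h := fun _ => 0) fun s hs hs' => indicator_of_notMem
      (fun hm => hfin ((tauP_along_lt_top hf hs hs').1 hm.2.2)) _]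
    simp [curveInt]

lemma curveInt_backward (hf : IsFlow Φ) (hΩ : IsOpen Ω) (k w : (Fin N → ℝ) → ℝ) {z : Fin N → ℝ}
    (hz : z ∈ GammaP Ω Φ) :
    curveInt (fun s => (finSet Ω Φ).indicator (fun x => k (entry Ω Φ x) * w x) (Φ z (-s)))
        (tauM Ω Φ z)
      = {z | tauM Ω Φ z < ⊤}.indicator
          (fun z => k (entry Ω Φ z) * curveMass Ω Φ w (entry Ω Φ z)) z := by
  have hz' : z ∈ GammaM Ω (rev Φ) := by rwa [GammaM_rev]
  have hzΩ := GammaM_notMem hΩ hz'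
  by_cases hfin : tauM Ω Φ z < ⊤
  · rw [indicator_of_mem (by exact hfin), ← curveMass_entry hf hΩ w hz hfin, ← curveInt_const_mul]
    refine curveInt_congr fun s hs hs' => ?_
    obtain ⟨hT0, hout, -⟩ := entry_of_GammaP hf hΩ hz hfin
    have hin : ∀ r, 0 < r → ENNReal.ofReal r < tauM Ω Φ z → Φ z (-r) ∈ Ω := fun r h h' =>
      mem_of_lt_tauP (Φ := rev Φ) h h'
    have hτP : tauP Ω Φ (Φ z (-s)) = ENNReal.ofReal s := by
      have := tauM_along hf.rev hzΩ hs hs'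
      rwa [tauM_rev] at this
    have hT := (ENNReal.ofReal_toReal hfin.ne).symm
    unfold entry at hout ⊢
    set T := (tauM Ω Φ z).toReal
    have hsT : s < T := by
      rw [hT] at hs'; exact (ENNReal.ofReal_lt_ofReal_iff hT0).1 hs'
    have hτM : tauM Ω Φ (Φ z (-s)) = ENNReal.ofReal (T - s) := by
      refine tauM_eq (by linarith) (fun r hr hrT => ?_) ?_
      · rw [hf.add, ← neg_add]
        refine hin _ (by linarith) ?_
        rw [hT, ENNReal.ofReal_lt_ofReal_iff hT0]; linarith
      · rw [hf.add]; convert hout using 3; ring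
    have hmem : Φ z (-s) ∈ finSet Ω Φ := ⟨hin s hs hs', by simp [hτM], by simp [hτP]⟩
    rw [indicator_of_mem hmem, hτM, ENNReal.toReal_ofReal (by linarith), hf.add]
    congr 3
    ring
  · rw [indicator_of_notMem (by exact hfin)]
    rw [curveInt_congr (τ := tauM Ω Φ z) (h := fun _ => 0) fun s hs hs' => indicator_of_notMem
      (fun hm => hfin ((tauP_along_lt_top hf.rev hs hs').1 hm.2.1)) _]
    simp [curveInt]

/-- Both boundary measures compute the integral over `Ω₋ ∩ Ω₊` of `(k ∘ entry) * w`. -/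
lemma key_identity (hf : IsFlow Φ) (hΩ : IsOpen Ω) {μ μm μp : Measure (Fin N → ℝ)}
    (hbm : IsBoundaryMeasures Ω Φ μ μm μp) (k w : (Fin N → ℝ) → ℝ)
    (hint : Integrable ((finSet Ω Φ).indicator (fun x => k (entry Ω Φ x) * w x)) (μ.restrict Ω)) :
    (∫ y in {y ∈ GammaM Ω Φ | tauP Ω Φ y < ⊤}, k y * curveMass Ω Φ w y ∂μm
      = ∫ x in finSet Ω Φ, k (entry Ω Φ x) * w x ∂μ) ∧
    (∫ z in {z ∈ GammaP Ω Φ | tauM Ω Φ z < ⊤},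
        k (entry Ω Φ z) * curveMass Ω Φ w (entry Ω Φ z) ∂μp
      = ∫ x in finSet Ω Φ, k (entry Ω Φ x) * w x ∂μ) := by
  obtain ⟨h1, h2⟩ := hbm _ hint
  have hD := measurableSet_finSet hf hΩ
  have e1 : {x ∈ Ω | tauM Ω Φ x < ⊤} ∩ finSet Ω Φ = finSet Ω Φ :=
    inter_eq_right.2 fun x hx => ⟨hx.1, hx.2.1⟩
  have e2 : {x ∈ Ω | tauP Ω Φ x < ⊤} ∩ finSet Ω Φ = finSet Ω Φ :=
    inter_eq_right.2 fun x hx => ⟨hx.1, hx.2.2⟩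
  rw [setIntegral_indicator hD, e1] at h1
  rw [setIntegral_indicator hD, e2] at h2
  have hGP : MeasurableSet (GammaP Ω Φ) := by
    rw [← GammaM_rev]; exact measurableSet_GammaM hf.rev hΩ
  have hτP : MeasurableSet {y | tauP Ω Φ y < ⊤} := measurable_tauP hf hΩ measurableSet_Iio
  have hτM : MeasurableSet {z | tauM Ω Φ z < ⊤} := measurable_tauM hf hΩ measurableSet_Iio
  rw [setIntegral_congr_fun (measurableSet_GammaM hf hΩ)
    (fun y hy => curveInt_forward hf hΩ k w hy),
    setIntegral_indicator hτP] at h1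
  rw [setIntegral_congr_fun hGP (fun y hy => curveInt_backward hf hΩ k w hy),
    setIntegral_indicator hτM] at h2
  exact ⟨h1.symm, h2.symm⟩

end

/-! ### Comparison of measures through weighted integrals -/

/-- Two measures `m` and `p`, compared along a map `e`, give the same integrals as soon as the
finite measures obtained with the densities `H` and `H ∘ e` correspond under `e`. -/
lemma integral_eq_of_weighted {α : Type*} [MeasurableSpace α] {m p : Measure α} {e : α → α}
    (he : Measurable e) {H : α → ℝ} (hH : Measurable H)
    (hm0 : ∀ᵐ y ∂m, 0 < H y) (hp0 : ∀ᵐ z ∂p, 0 < H (e z))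
    (hmi : Integrable H m) (hpi : Integrable (fun z => H (e z)) p)
    (heq : ∀ B, MeasurableSet B → ∫ y in B, H y ∂m = ∫ z in e ⁻¹' B, H (e z) ∂p)
    {ψ : α → ℝ} (hψ : AEStronglyMeasurable ψ m) :
    ∫ y, ψ y ∂m = ∫ z, ψ (e z) ∂p := by
  have hmeas : (p.withDensity fun z => ((H (e z)).toNNReal : ℝ≥0∞)).map e
      = m.withDensity fun y => ((H y).toNNReal : ℝ≥0∞) := by
    ext B hB
    rw [Measure.map_apply he hB, withDensity_apply _ (he hB), withDensity_apply _ hB]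
    have h1 := ofReal_integral_eq_lintegral_ofReal (hmi.integrableOn (s := B))
      (ae_restrict_of_ae (hm0.mono fun _ h => h.le))
    have h2 := ofReal_integral_eq_lintegral_ofReal (hpi.integrableOn (s := e ⁻¹' B))
      (ae_restrict_of_ae (hp0.mono fun _ h => h.le))
    rw [heq B hB] at h1
    exact h2.symm.trans h1
  have hHn : Measurable fun y => (H y).toNNReal := hH.real_toNNReal
  calc ∫ y, ψ y ∂m = ∫ y, (H y).toNNReal • (ψ y / H y) ∂m := by
        refine integral_congr_ae (hm0.mono fun y hy => ?_)
        simp only [NNReal.smul_def, Real.coe_toNNReal _ hy.le, smul_eq_mul]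
        field_simp
    _ = ∫ y, ψ y / H y ∂m.withDensity fun y => ((H y).toNNReal : ℝ≥0∞) :=
        (integral_withDensity_eq_integral_smul hHn _).symm
    _ = ∫ z, ψ (e z) / H (e z) ∂p.withDensity fun z => ((H (e z)).toNNReal : ℝ≥0∞) := by
        rw [← hmeas, integral_map he.aemeasurable]
        rw [hmeas]
        exact (hψ.aemeasurable.div hH.aemeasurable).aestronglyMeasurable.mono_ac (withDensity_absolutelyContinuous _ _)
    _ = ∫ z, (H (e z)).toNNReal • (ψ (e z) / H (e z)) ∂p :=
        integral_withDensity_eq_integral_smul (hHn.comp he) _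
    _ = ∫ z, ψ (e z) ∂p := by
        refine integral_congr_ae (hp0.mono fun z hz => ?_)
        simp only [NNReal.smul_def, Real.coe_toNNReal _ hz.le, smul_eq_mul]
        field_simp

theorem stmt_5
    {N : ℕ} (hN : 1 ≤ N) (κ : ℝ≥0) (hκ : 0 < κ)
    (F : (Fin N → ℝ) → (Fin N → ℝ)) (hF : LipschitzWith κ F)
    (Φ : (Fin N → ℝ) → ℝ → (Fin N → ℝ))
    (hΦ0 : ∀ x, Φ x 0 = x)
    (hΦ' : ∀ x s, HasDerivAt (Φ x) (F (Φ x s)) s)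
    (Ω : Set (Fin N → ℝ)) (hΩ : IsOpen Ω)
    (μ : Measure (Fin N → ℝ)) [IsFiniteMeasureOnCompacts μ]
    (hinv : ∀ (A : Set (Fin N → ℝ)) (t : ℝ), MeasurableSet A →
      μ ((fun x => Φ x t) '' A) = μ A)
    (μm μp : Measure (Fin N → ℝ))
    (hbm : IsBoundaryMeasures Ω Φ μ μm μp)
    (ψ : (Fin N → ℝ) → ℝ) (hψ : Integrable ψ (μm.restrict (GammaM Ω Φ))) :
    ∫ y in {y ∈ GammaM Ω Φ | tauP Ω Φ y < ⊤}, ψ y ∂μm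
      = ∫ z in {z ∈ GammaP Ω Φ | tauM Ω Φ z < ⊤},
          ψ (Φ z (-(tauM Ω Φ z).toReal)) ∂μp := by
  have hf : IsFlow Φ := isFlow_of_lipschitz hF hΦ0 hΦ'
  obtain ⟨g, hg0, hgm, hgi⟩ := exists_pos_lintegral_lt_of_sigmaFinite μ one_ne_zero
  let w : (Fin N → ℝ) → ℝ := fun x => min (g x : ℝ) 1
  have hw : Measurable w := hgm.coe_nnreal_real.min measurable_const
  have hw0 : ∀ x, 0 < w x := fun x => lt_min (by exact_mod_cast hg0 x) one_pos
  have hw1 : ∀ x, w x ≤ 1 := fun x => min_le_right _ _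
  have hwi : Integrable w μ := by
    have hgint : Integrable (fun x => (g x : ℝ)) μ := by
      refine ⟨hgm.coe_nnreal_real.aestronglyMeasurable, ?_⟩
      simpa [HasFiniteIntegral] using hgi.trans ENNReal.one_lt_top
    refine hgint.mono' hw.aestronglyMeasurable (Eventually.of_forall fun x => ?_)
    rw [Real.norm_of_nonneg (hw0 x).le]
    exact min_le_left _ _
  have hD := measurableSet_finSet hf hΩ
  have he := measurable_entry hf hΩ
  have hH := measurable_curveMass hf hΩ hw
  have hGM := measurableSet_GammaM hf hΩ
  have hGP : MeasurableSet (GammaP Ω Φ) := by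
    rw [← GammaM_rev]; exact measurableSet_GammaM hf.rev hΩ
  have hSm : MeasurableSet {y ∈ GammaM Ω Φ | tauP Ω Φ y < ⊤} :=
    hGM.inter (measurable_tauP hf hΩ measurableSet_Iio)
  have hSp : MeasurableSet {z ∈ GammaP Ω Φ | tauM Ω Φ z < ⊤} :=
    hGP.inter (measurable_tauM hf hΩ measurableSet_Iio)
  have hposm : ∀ y ∈ {y ∈ GammaM Ω Φ | tauP Ω Φ y < ⊤}, 0 < curveMass Ω Φ w y := fun y hy =>
    curveMass_pos hf hw hw0 hw1 hy.2 ((GammaM_eq hf hΩ).subset hy.1).2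
  have hposp : ∀ z ∈ {z ∈ GammaP Ω Φ | tauM Ω Φ z < ⊤}, 0 < curveMass Ω Φ w (entry Ω Φ z) := by
    intro z hz
    obtain ⟨hT0, -, hτ⟩ := entry_of_GammaP hf hΩ hz.1 hz.2
    refine curveMass_pos hf hw hw0 hw1 (hτ ▸ hz.2) ?_
    rw [hτ]; exact (ENNReal.toReal_pos_iff.1 hT0).1
  change _ = ∫ z in {z ∈ GammaP Ω Φ | tauM Ω Φ z < ⊤}, ψ (entry Ω Φ z) ∂μp
  by_cases hμD : μ (finSet Ω Φ) = 0
  · -- Every function supported in a null set is integrable, so no regularity of the weight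
    -- `ψ / curveMass` is needed, and both sides vanish.
    have hzero : (finSet Ω Φ).indicator
        (fun x => ψ (entry Ω Φ x) / curveMass Ω Φ w (entry Ω Φ x) * w x)
        =ᵐ[μ.restrict Ω] 0 :=
      ae_restrict_of_ae (indicator_meas_zero hμD)
    obtain ⟨h1, h2⟩ := key_identity hf hΩ hbm (fun y => ψ y / curveMass Ω Φ w y) w
      ((integrable_zero _ _ _).congr hzero.symm)
    rw [setIntegral_congr_fun hSm (g := ψ) fun y hy => div_mul_cancel₀ _ (hposm y hy).ne'] at h1
    rw [setIntegral_congr_fun hSp (g := fun z => ψ (entry Ω Φ z))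
      fun y hy => div_mul_cancel₀ _ (hposp y hy).ne'] at h2
    rw [h1, h2]
  · have hkey := fun (B : Set (Fin N → ℝ)) (hB : MeasurableSet B) =>
      key_identity hf hΩ hbm (B.indicator 1) w (by
        refine (hwi.restrict (s := Ω)).mono'
          (((measurable_one.indicator hB).comp he).mul hw |>.indicator hD).aestronglyMeasurable
          (Eventually.of_forall fun x => ?_)
        refine (norm_indicator_le_norm_self _ _).trans ?_
        rw [norm_mul, Real.norm_of_nonneg (hw0 x).le]
        refine mul_le_of_le_one_left (hw0 x).le ?_
        exact (norm_indicator_le_norm_self _ _).trans (by simp))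
    have hcpos : 0 < ∫ x in finSet Ω Φ, w x ∂μ := by
      rw [setIntegral_pos_iff_support_of_nonneg_ae (Eventually.of_forall fun x => (hw0 x).le)
        hwi.integrableOn, Function.support_eq_univ fun x => (hw0 x).ne', univ_inter]
      exact pos_iff_ne_zero.2 hμD
    obtain ⟨hu1, hu2⟩ := hkey univ .univ
    simp only [indicator_univ, Pi.one_apply, one_mul] at hu1 hu2
    -- A nonzero Bochner integral certifies integrability.
    have hmi := not_imp_comm.1 integral_undef (hu1 ▸ hcpos.ne')
    have hpi := not_imp_comm.1 integral_undef (hu2 ▸ hcpos.ne')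
    refine integral_eq_of_weighted he hH (ae_restrict_of_forall_mem hSm hposm)
      (ae_restrict_of_forall_mem hSp hposp) hmi hpi (fun B hB => ?_)
      (hψ.aestronglyMeasurable.mono_measure (Measure.restrict_mono (fun y hy => hy.1) le_rfl))
    rw [← integral_indicator hB, ← integral_indicator (he hB)]
    obtain ⟨hB1, hB2⟩ := hkey B hB
    refine Eq.trans ?_ ((hB1.trans hB2.symm).trans ?_)
    · refine integral_congr_ae (Eventually.of_forall fun y => ?_)
      by_cases hy : y ∈ B <;> simp [hy]
    · refine integral_congr_ae (Eventually.of_forall fun z => ?_)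
      by_cases hy : entry Ω Φ z ∈ B <;> simp [hy]

end
end

section
/- Let f ∈ D(T_max) and set Ω∞ = Ω−∞ ∩ Ω+∞ = { x ∈ Ω : τ−(x) = τ+(x) = ∞ }. Then there exists a set O ⊆ Ω∞ with μ(O) = 0 and a function f̃ defined on { Φ(x,t) : x ∈ Ω∞ \ O, t ∈ ℝ } such that f̃(x) = f(x) for μ-almost every x ∈ Ω∞, and f̃(Φ(x,s)) − f̃(Φ(x,t)) = ∫_s^t (T_max f)(Φ(x,r)) dr for every x ∈ Ω∞ \ O and all real s < t. -/
/-!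
For a continuous `k` with compact support, the average `ψ(x) = ∫₀^ε k(Φ(x,-u)) du` is
differentiable along the flow with `Dψ(x) = k(x) - k(Φ(x,-ε))`, and it is an admissible test
function as soon as the orbits of the points of `supp k` stay in `Ω` between the times `0` and
`ε` (`isTestFun_average`). Inserting it in the weak formulation and moving the flow from `k` to
`f` and `g` by invariance of `μ` and Fubini gives
`∫ k(y) (f(y) - f(Φ(y,ε)) - ∫₀^ε g(Φ(y,u)) du) dμ(y) = 0`.
The set of admissible base points is open, so the bracket vanishes at almost every one of them
(`ae_eq_fixed_time`). By Fubini, almost every `y` whose whole orbit lies in `Ω` is good, that is,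
`f(Φ(y,ε)) = f(y) - ∫₀^ε g(Φ(y,u)) du` for almost every real `ε` (`ae_good`).

On the orbit of a good point `y`, the representative is defined at `Φ(y,a)` as
`f(y) - ∫₀^a g(Φ(y,u)) du`. This depends neither on the good point chosen on the orbit nor on
the time `a`, which matters for periodic orbits: two competing values propagate along the orbit
to `f` itself at almost every time, so they agree (`good_unique`). In particular the
representative equals `f` at every good point. The exceptional set consists of the points whose
orbit stays in `Ω` and which are not good.
-/

open MeasureTheory Set Filter Topology
open scoped ENNReal NNReal

noncomputable section

/-! ### The flow of a Lipschitz field -/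

lemma flow_add {N : ℕ} {κ : ℝ≥0}
    {F : (Fin N → ℝ) → (Fin N → ℝ)} (hF : LipschitzWith κ F)
    {Φ : (Fin N → ℝ) → ℝ → (Fin N → ℝ)}
    (hΦ0 : ∀ x, Φ x 0 = x) (hΦ' : ∀ x s, HasDerivAt (Φ x) (F (Φ x s)) s)
    (x : Fin N → ℝ) (s t : ℝ) : Φ (Φ x s) t = Φ x (s + t) := by
  have h := ODE_solution_unique_univ (v := fun _ => F) (s := fun _ => univ) (K := κ)
    (f := Φ (Φ x s)) (g := fun t => Φ x (s + t)) (t₀ := 0)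
    (fun _ => hF.lipschitzOnWith) (fun t => ⟨hΦ' _ t, mem_univ _⟩)
    (fun t => ⟨(hΦ' x (s + t)).comp_const_add s t, mem_univ _⟩) (by simp [hΦ0])
  exact congrFun h t

lemma flow_dist {N : ℕ} {κ : ℝ≥0}
    {F : (Fin N → ℝ) → (Fin N → ℝ)} (hF : LipschitzWith κ F)
    {Φ : (Fin N → ℝ) → ℝ → (Fin N → ℝ)}
    (hΦ0 : ∀ x, Φ x 0 = x) (hΦ' : ∀ x s, HasDerivAt (Φ x) (F (Φ x s)) s)
    (x y : Fin N → ℝ) (s : ℝ) :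
    dist (Φ x s) (Φ y s) ≤ dist x y * Real.exp (κ * |s|) := by
  have key : ∀ (G : (Fin N → ℝ) → (Fin N → ℝ)), LipschitzWith κ G → ∀ a b : ℝ → (Fin N → ℝ),
      (∀ t, HasDerivAt a (G (a t)) t) → (∀ t, HasDerivAt b (G (b t)) t) → ∀ t, 0 ≤ t →
      dist (a t) (b t) ≤ dist (a 0) (b 0) * Real.exp (κ * t) := by
    intro G hG a b ha hb t ht
    have := dist_le_of_trajectories_ODE (v := fun _ => G) (fun _ => hG) (a := 0) (b := t)
      (f := a) (g := b) (fun u _ => (ha u).continuousAt.continuousWithinAt)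
      (fun u _ => (ha u).hasDerivWithinAt) (fun u _ => (hb u).continuousAt.continuousWithinAt)
      (fun u _ => (hb u).hasDerivWithinAt) le_rfl t ⟨ht, le_rfl⟩
    simpa using this
  rcases le_total 0 s with hs | hs
  · simpa [hΦ0, abs_of_nonneg hs] using key F hF (Φ x) (Φ y) (hΦ' x) (hΦ' y) s hs
  · -- backward in time, the curves solve the equation of the Lipschitz field `-F`
    have hrev : ∀ x t, HasDerivAt (fun t => Φ x (-t)) ((fun z => -F z) (Φ x (-t))) t := by
      intro x t
      have := (hΦ' x (-t)).scomp t (hasDerivAt_neg t)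
      simpa [Function.comp_def] using this
    have := key (fun z => -F z) hF.neg _ _ (hrev x) (hrev y) (-s) (by linarith)
    simpa [hΦ0, abs_of_nonpos hs] using this

lemma flow_continuous {N : ℕ} {κ : ℝ≥0}
    {F : (Fin N → ℝ) → (Fin N → ℝ)} (hF : LipschitzWith κ F)
    {Φ : (Fin N → ℝ) → ℝ → (Fin N → ℝ)}
    (hΦ0 : ∀ x, Φ x 0 = x) (hΦ' : ∀ x s, HasDerivAt (Φ x) (F (Φ x s)) s) :
    Continuous (fun p : (Fin N → ℝ) × ℝ => Φ p.1 p.2) := by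
  rw [continuous_iff_continuousAt]
  rintro ⟨x, s⟩
  have hx : Continuous (Φ x) :=
    continuous_iff_continuousAt.2 fun u => (hΦ' x u).continuousAt
  rw [ContinuousAt, tendsto_iff_dist_tendsto_zero]
  have h1 : Tendsto (fun p : (Fin N → ℝ) × ℝ =>
      dist p.1 x * Real.exp (κ * |p.2|) + dist (Φ x p.2) (Φ x s)) (𝓝 (x, s)) (𝓝 0) := by
    have hc : Continuous (fun p : (Fin N → ℝ) × ℝ =>
      dist p.1 x * Real.exp (κ * |p.2|) + dist (Φ x p.2) (Φ x s)) := by fun_prop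
    simpa using hc.tendsto (x, s)
  refine squeeze_zero (fun _ => dist_nonneg) (fun p => ?_) h1
  exact (dist_triangle _ (Φ x p.2) _).trans
    (add_le_add_left (flow_dist hF hΦ0 hΦ' p.1 x p.2) _)

/-- A continuous one-parameter group of transformations of `ℝ^N` preserving the measure `μ`. -/
structure MeasureFlow {N : ℕ} (Φ : (Fin N → ℝ) → ℝ → (Fin N → ℝ))
    (μ : Measure (Fin N → ℝ)) : Prop where
  zero : ∀ x, Φ x 0 = x
  add : ∀ x s t, Φ (Φ x s) t = Φ x (s + t)
  cont : Continuous (fun p : (Fin N → ℝ) × ℝ => Φ p.1 p.2)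
  mp : ∀ t, MeasurePreserving (fun x => Φ x t) μ μ

namespace MeasureFlow

variable {N : ℕ} {Φ : (Fin N → ℝ) → ℝ → (Fin N → ℝ)} {μ : Measure (Fin N → ℝ)}

lemma cont_comp (h : MeasureFlow Φ μ) {X : Type*} [TopologicalSpace X]
    {a : X → (Fin N → ℝ)} {b : X → ℝ} (ha : Continuous a) (hb : Continuous b) :
    Continuous fun z => Φ (a z) (b z) := h.cont.comp (ha.prodMk hb)

lemma of_lipschitz {κ : ℝ≥0}
    {F : (Fin N → ℝ) → (Fin N → ℝ)} (hF : LipschitzWith κ F)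
    (hΦ0 : ∀ x, Φ x 0 = x) (hΦ' : ∀ x s, HasDerivAt (Φ x) (F (Φ x s)) s)
    (hinv : ∀ (A : Set (Fin N → ℝ)) (t : ℝ), MeasurableSet A →
      μ ((fun x => Φ x t) '' A) = μ A) : MeasureFlow Φ μ := by
  have hadd := flow_add hF hΦ0 hΦ'
  have hc := flow_continuous hF hΦ0 hΦ'
  refine ⟨hΦ0, hadd, hc, fun t => ?_⟩
  have hm : Measurable fun x => Φ x t :=
    (hc.comp (continuous_id.prodMk continuous_const)).measurable
  refine ⟨hm, Measure.ext fun A hA => ?_⟩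
  rw [Measure.map_apply hm hA, ← hinv A (-t) hA]
  congr 1
  ext x
  simp only [mem_preimage, mem_image]
  constructor
  · intro hx
    exact ⟨_, hx, by simp [hadd, hΦ0]⟩
  · rintro ⟨y, hy, rfl⟩
    simpa [hadd, hΦ0] using hy

/-- The shear `(u, x) ↦ (u, Φ(x,u))` preserves every product measure `ν ⊗ μ`. -/
lemma shear [SFinite μ] (h : MeasureFlow Φ μ) (ν : Measure ℝ) [SFinite ν] :
    MeasurePreserving (fun p : ℝ × (Fin N → ℝ) => (p.1, Φ p.2 p.1)) (ν.prod μ) (ν.prod μ) :=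
  (MeasurePreserving.id ν).skew_product (g := fun u x => Φ x u)
    (h.cont_comp continuous_snd continuous_fst).measurable
    (ae_of_all _ fun u => (h.mp u).map_eq)

/-- A property holding `μ`-a.e. holds at almost every time along almost every orbit. -/
lemma ae_orbit [SFinite μ] (h : MeasureFlow Φ μ) {p : (Fin N → ℝ) → Prop}
    (hp : ∀ᵐ x ∂μ, p x) : ∀ᵐ y ∂μ, ∀ᵐ s : ℝ, p (Φ y s) := by
  have h1 : ∀ᵐ q ∂((volume : Measure ℝ).prod μ), p q.2 :=
    Measure.quasiMeasurePreserving_snd.ae hp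
  have h2 := (h.shear volume).quasiMeasurePreserving.ae h1
  have h3 : ∀ᵐ q ∂(μ.prod (volume : Measure ℝ)), p (Φ q.1 q.2) :=
    (Measure.measurePreserving_swap (μ := μ)).quasiMeasurePreserving.ae h2
  exact Measure.ae_ae_of_ae_prod h3

lemma integrable_shear [SFinite μ] (h : MeasureFlow Φ μ) (ν : Measure ℝ) [IsFiniteMeasure ν]
    {g : (Fin N → ℝ) → ℝ} (hg : Integrable g μ) :
    Integrable (fun p : ℝ × (Fin N → ℝ) => g (Φ p.2 p.1)) (ν.prod μ) :=
  (h.shear ν).integrable_comp_of_integrable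
    (g := fun p : ℝ × (Fin N → ℝ) => g p.2) (hg.comp_snd ν)

lemma integrable_time [SFinite μ] (h : MeasureFlow Φ μ)
    {g : (Fin N → ℝ) → ℝ} (hg : Integrable g μ) (t : ℝ) :
    Integrable (fun x => g (Φ x t)) μ := (h.mp t).integrable_comp_of_integrable hg

lemma ae_intervalIntegrable [SFinite μ] (h : MeasureFlow Φ μ)
    {g : (Fin N → ℝ) → ℝ} (hg : Integrable g μ) :
    ∀ᵐ y ∂μ, ∀ a b : ℝ, IntervalIntegrable (fun u => g (Φ y u)) volume a b := by
  have h1 : ∀ᵐ y ∂μ, ∀ n : ℕ,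
      IntegrableOn (fun u => g (Φ y u)) (Icc (-n : ℝ) n) volume := by
    rw [ae_all_iff]
    intro n
    exact (h.integrable_shear (volume.restrict (Icc (-n : ℝ) n)) hg).prod_left_ae
  filter_upwards [h1] with y hy a b
  obtain ⟨n, hn⟩ := exists_nat_ge (max |a| |b|)
  rw [intervalIntegrable_iff]
  refine (hy n).mono_set fun u hu => ?_
  have ha := (le_max_left _ _).trans hn
  have hb := (le_max_right _ _).trans hn
  rw [abs_le] at ha hb
  rcases mem_uIoc.1 hu with h' | h' <;> constructor <;> linarith [h'.1, h'.2]

/-- Change of variables by the measure-preserving map `Φ(·,t)`. -/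
lemma integral_shift (h : MeasureFlow Φ μ) (a b : (Fin N → ℝ) → ℝ) (t : ℝ) :
    ∫ x, a x * b (Φ x (-t)) ∂μ = ∫ y, a (Φ y t) * b y ∂μ := by
  have hinj : Function.Injective fun x => Φ x t := by
    intro x y hxy
    have := congrArg (fun z => Φ z (-t)) hxy
    simpa [h.add, h.zero] using this
  have hemb : MeasurableEmbedding fun x => Φ x t :=
    ((h.mp t).measurable).measurableEmbedding hinj
  rw [← (h.mp t).integral_comp hemb]
  simp [h.add, h.zero]

/-! ### Test functions obtained by averaging along the flow -/

/-- The pairs `(x, ε)` for which the orbit of `x` stays in `Ω` between the times `0` and `ε`. -/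
def stay (Ω : Set (Fin N → ℝ)) (Φ : (Fin N → ℝ) → ℝ → (Fin N → ℝ)) :
    Set ((Fin N → ℝ) × ℝ) :=
  {p | ∀ v ∈ Icc (0 : ℝ) 1, Φ p.1 (p.2 * v) ∈ Ω}

lemma isOpen_stay (h : MeasureFlow Φ μ) {Ω : Set (Fin N → ℝ)} (hΩ : IsOpen Ω) :
    IsOpen (stay Ω Φ) := by
  rw [isOpen_iff_eventually]
  intro p hp
  refine isCompact_Icc.eventually_forall_of_forall_eventually
    (P := fun (p : (Fin N → ℝ) × ℝ) v => Φ p.1 (p.2 * v) ∈ Ω) fun v hv => ?_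
  have hc : Continuous fun z : ((Fin N → ℝ) × ℝ) × ℝ => Φ z.1.1 (z.1.2 * z.2) :=
    h.cont_comp (by fun_prop) (by fun_prop)
  exact hc.continuousAt.eventually (hΩ.mem_nhds (hp v hv))

lemma measurableSet_orbit (h : MeasureFlow Φ μ) {Ω : Set (Fin N → ℝ)} (hΩ : IsOpen Ω) :
    MeasurableSet {x | ∀ s, Φ x s ∈ Ω} := by
  have hrw : {x | ∀ s, Φ x s ∈ Ω} =
      ⋂ n : ℤ, (fun x : Fin N → ℝ => (x, (n : ℝ))) ⁻¹' stay Ω Φ := by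
    ext x
    simp only [mem_ofPred_eq, mem_iInter, mem_preimage, stay]
    refine ⟨fun hx n v _ => hx _, fun hx s => ?_⟩
    rcases le_total 0 s with hs | hs
    · have hn : s ≤ ((⌈s⌉ + 1 : ℤ) : ℝ) := by push_cast; linarith [Int.le_ceil s]
      have hpos : (0 : ℝ) < ((⌈s⌉ + 1 : ℤ) : ℝ) := by push_cast; linarith [Int.le_ceil s]
      have := hx (⌈s⌉ + 1) (s / ((⌈s⌉ + 1 : ℤ) : ℝ)) ⟨div_nonneg hs hpos.le, (div_le_one hpos).2 hn⟩
      rwa [mul_div_cancel₀ _ hpos.ne'] at this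
    · have hn : ((⌊s⌋ - 1 : ℤ) : ℝ) ≤ s := by push_cast; linarith [Int.floor_le s]
      have hneg : ((⌊s⌋ - 1 : ℤ) : ℝ) < 0 := by push_cast; linarith [Int.floor_le s]
      have := hx (⌊s⌋ - 1) (s / ((⌊s⌋ - 1 : ℤ) : ℝ))
        ⟨div_nonneg_of_nonpos hs hneg.le, (div_le_one_of_neg hneg).2 hn⟩
      rwa [mul_div_cancel₀ _ hneg.ne] at this
  rw [hrw]
  exact MeasurableSet.iInter fun n =>
    ((h.isOpen_stay hΩ).preimage (continuous_id.prodMk continuous_const)).measurableSet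

/-- The average `ψ(x) = ∫₀^ε k(Φ(x,-u)) du` of a continuous compactly supported `k` telescopes
when differentiated along the flow. Its support is swept out by the orbits of `supp k` between
the times `0` and `ε`, hence stays in `Ω` as soon as these orbits do. -/
lemma isTestFun_average (h : MeasureFlow Φ μ) (Ω : Set (Fin N → ℝ)) (ε : ℝ)
    {k : (Fin N → ℝ) → ℝ} (hk : Continuous k) (hks : HasCompactSupport k)
    (hkV : ∀ x ∈ tsupport k, (x, ε) ∈ stay Ω Φ) :
    IsTestFun Ω Φ (fun x => ∫ u in (0 : ℝ)..ε, k (Φ x (-u)))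
      (fun x => k x - k (Φ x (-ε))) := by
  obtain ⟨C, hC⟩ := hks.exists_bound_of_continuous hk
  simp only [Real.norm_eq_abs] at hC
  have hcont : Continuous fun x => ∫ u in (0 : ℝ)..ε, k (Φ x (-u)) := by
    apply intervalIntegral.continuous_parametric_intervalIntegral_of_continuous'
    exact hk.comp (h.cont_comp continuous_fst continuous_snd.neg)
  have hD : Continuous fun x => k x - k (Φ x (-ε)) :=
    hk.sub (hk.comp (h.cont_comp continuous_id continuous_const))
  have hderiv : ∀ x s, HasDerivAt (fun s => ∫ u in (0 : ℝ)..ε, k (Φ (Φ x s) (-u)))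
      (k (Φ x s) - k (Φ x (s - ε))) s := by
    intro x s
    have hkx : Continuous fun v => k (Φ x v) := hk.comp (h.cont_comp continuous_const continuous_id)
    have hP : ∀ v, HasDerivAt (fun v => ∫ w in (0 : ℝ)..v, k (Φ x w)) (k (Φ x v)) v :=
      fun v => hkx.integral_hasStrictDerivAt 0 v |>.hasDerivAt
    have hrw : (fun s => ∫ u in (0 : ℝ)..ε, k (Φ (Φ x s) (-u))) = fun s =>
        (∫ w in (0 : ℝ)..s, k (Φ x w)) - ∫ w in (0 : ℝ)..(s - ε), k (Φ x w) := by
      funext s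
      rw [intervalIntegral.integral_interval_sub_left (hkx.intervalIntegrable _ _)
        (hkx.intervalIntegrable _ _)]
      have := intervalIntegral.integral_comp_sub_left (a := 0) (b := ε) (fun w => k (Φ x w)) s
      simp only [h.add, ← sub_eq_add_neg]
      simpa using this
    rw [hrw]
    exact (hP s).sub ((hP (s - ε)).comp_sub_const s ε)
  refine ⟨hcont.measurable, ⟨C * |ε|, fun x => ?_⟩, ?_, fun x _ => ?_, fun x _ => ?_,
    hD.measurable, ⟨C + C, fun x => ?_⟩⟩
  · simpa using intervalIntegral.norm_integral_le_of_norm_le_const (a := 0) (b := ε)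
      (f := fun u => k (Φ x (-u))) (C := C) fun u _ => hC _
  · refine ⟨(fun p : (Fin N → ℝ) × ℝ => Φ p.1 (ε * p.2)) '' (tsupport k ×ˢ Icc (0 : ℝ) 1),
      (hks.isCompact.prod isCompact_Icc).image (h.cont_comp (by fun_prop) (by fun_prop)), ?_, ?_⟩
    · rintro _ ⟨⟨x, v⟩, ⟨hx, hv⟩, rfl⟩
      exact hkV x hx v hv
    · intro x hx
      have hscale := intervalIntegral.mul_integral_comp_mul_left
        (a := (0 : ℝ)) (b := 1) (f := fun u => k (Φ x (-u))) (c := ε)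
      simp only [mul_zero, mul_one] at hscale
      rw [← hscale]
      rw [intervalIntegral.integral_congr (g := fun _ => (0 : ℝ))]
      · simp
      intro v hv
      rw [uIcc_of_le zero_le_one] at hv
      by_contra hne
      refine hx ⟨(Φ x (-(ε * v)), v), ⟨subset_tsupport _ hne, hv⟩, ?_⟩
      simp [h.add, h.zero]
  · refine ContDiff.contDiffOn ?_
    rw [contDiff_one_iff_deriv]
    refine ⟨fun s => (hderiv x s).differentiableAt, ?_⟩
    rw [funext fun s => (hderiv x s).deriv]
    exact (hk.comp (h.cont_comp continuous_const continuous_id)).sub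
      (hk.comp (h.cont_comp continuous_const (by fun_prop)))
  · simpa [h.zero] using hderiv x 0
  · exact (abs_sub _ _).trans (add_le_add (hC _) (hC _))

/-! ### The integrated equation along almost every orbit -/

/-- Testing against averages gives the integrated equation between the times `0` and `ε`. -/
lemma ae_eq_fixed_time [IsFiniteMeasureOnCompacts μ] (h : MeasureFlow Φ μ)
    {Ω : Set (Fin N → ℝ)} (hΩ : IsOpen Ω) {f g : (Fin N → ℝ) → ℝ}
    (hf : Integrable f μ) (hg : Integrable g μ)
    (hfg : ∀ ψ Dψ, IsTestFun Ω Φ ψ Dψ → ∫ x, g x * ψ x ∂μ = ∫ x, f x * Dψ x ∂μ) (ε : ℝ) :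
    ∀ᵐ y ∂μ, (y, ε) ∈ stay Ω Φ → f y - f (Φ y ε) - ∫ u in (0 : ℝ)..ε, g (Φ y u) = 0 := by
  have hfε := h.integrable_time hf ε
  have : IsFiniteMeasure (volume.restrict (uIoc (0 : ℝ) ε)) := by unfold uIoc; infer_instance
  have hshear := h.integrable_shear (volume.restrict (uIoc (0 : ℝ) ε)) hg
  have hI : Integrable (fun y => ∫ u in (0 : ℝ)..ε, g (Φ y u)) μ := by
    simp only [intervalIntegral.intervalIntegral_eq_integral_uIoc]
    exact hshear.integral_prod_right.smul (if (0 : ℝ) ≤ ε then (1 : ℝ) else -1)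
  have hV : IsOpen {y | (y, ε) ∈ stay Ω Φ} :=
    (h.isOpen_stay hΩ).preimage (continuous_id.prodMk continuous_const)
  refine hV.ae_eq_zero_of_integral_contDiff_smul_eq_zero
    (((hf.sub hfε).sub hI).locallyIntegrable.locallyIntegrableOn _) ?_
  intro k hk hks hkV
  have hkc := hk.continuous
  obtain ⟨C, hC⟩ := hks.exists_bound_of_continuous hkc
  have htest := hfg _ _ (h.isTestFun_average Ω ε hkc hks hkV)
  -- both sides of the weak identity are rewritten as integrals against `k`
  have hbd : ∀ {a : (Fin N → ℝ) → ℝ}, Integrable a μ → Integrable (fun y => a y * k y) μ :=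
    fun ha => ha.mul_bdd hkc.aestronglyMeasurable (ae_of_all _ hC)
  have hR : ∫ x, f x * (k x - k (Φ x (-ε))) ∂μ
      = ∫ x, f x * k x ∂μ - ∫ x, f (Φ x ε) * k x ∂μ := by
    rw [← h.integral_shift f k ε, ← integral_sub (hbd hf)]
    · simp only [mul_sub]
    · exact hf.mul_bdd (hkc.comp (h.cont_comp continuous_id continuous_const)).aestronglyMeasurable
        (ae_of_all _ fun _ => hC _)
  have hL : ∫ x, g x * (∫ u in (0 : ℝ)..ε, k (Φ x (-u))) ∂μ
      = ∫ y, (∫ u in (0 : ℝ)..ε, g (Φ y u)) * k y ∂μ := by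
    simp only [← intervalIntegral.integral_const_mul, ← intervalIntegral.integral_mul_const]
    rw [← intervalIntegral_integral_swap, ← intervalIntegral_integral_swap]
    · simp only [h.integral_shift]
    · exact hshear.mul_bdd (hkc.comp continuous_snd).aestronglyMeasurable
        (ae_of_all _ fun _ => hC _)
    · exact (hg.comp_snd _).mul_bdd (hkc.comp (h.cont_comp continuous_snd
        continuous_fst.neg)).aestronglyMeasurable (ae_of_all _ fun _ => hC _)
  rw [hR, hL] at htest
  have : ∀ x, k x • (f x - f (Φ x ε) - ∫ u in (0 : ℝ)..ε, g (Φ x u))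
      = f x * k x - f (Φ x ε) * k x - (∫ u in (0 : ℝ)..ε, g (Φ x u)) * k x := by
    intro x; simp only [smul_eq_mul]; ring
  simp only [this]
  rw [integral_sub (by exact (hbd hf).sub (hbd hfε)) (hbd hI),
    integral_sub (hbd hf) (hbd hfε), htest,
    sub_self]

/-- Exchanging the quantifiers by Fubini's theorem. -/
lemma ae_ae_eq [IsFiniteMeasureOnCompacts μ] (h : MeasureFlow Φ μ)
    {Ω : Set (Fin N → ℝ)} (hΩ : IsOpen Ω) {f g : (Fin N → ℝ) → ℝ}
    (hfm : Measurable f) (hgm : Measurable g)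
    (hf : Integrable f μ) (hg : Integrable g μ)
    (hfg : ∀ ψ Dψ, IsTestFun Ω Φ ψ Dψ → ∫ x, g x * ψ x ∂μ = ∫ x, f x * Dψ x ∂μ) :
    ∀ᵐ y ∂μ, ∀ᵐ ε : ℝ, (y, ε) ∈ stay Ω Φ →
      f y - f (Φ y ε) - ∫ u in (0 : ℝ)..ε, g (Φ y u) = 0 := by
  rw [Measure.ae_ae_comm]
  · exact ae_of_all _ fun ε => h.ae_eq_fixed_time hΩ hf hg hfg ε
  have hI : Measurable fun p : (Fin N → ℝ) × ℝ => ∫ u in (0 : ℝ)..p.2, g (Φ p.1 u) := by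
    -- rescaling to `[0,1]` turns the variable endpoint into a parameter of the integrand
    have hrw : (fun p : (Fin N → ℝ) × ℝ => ∫ u in (0 : ℝ)..p.2, g (Φ p.1 u)) = fun p =>
        p.2 * ∫ v in Ioc (0 : ℝ) 1, g (Φ p.1 (p.2 * v)) := by
      funext p
      have hscale := intervalIntegral.mul_integral_comp_mul_left
        (a := (0 : ℝ)) (b := 1) (f := fun u => g (Φ p.1 u)) (c := p.2)
      simp only [mul_zero, mul_one] at hscale
      rw [← hscale, intervalIntegral.integral_of_le zero_le_one]
    rw [hrw]
    refine measurable_snd.mul (StronglyMeasurable.measurable ?_)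
    refine StronglyMeasurable.integral_prod_right'
      (f := fun q : ((Fin N → ℝ) × ℝ) × ℝ => g (Φ q.1.1 (q.1.2 * q.2))) ?_
    have hc : Continuous fun z : ((Fin N → ℝ) × ℝ) × ℝ => Φ z.1.1 (z.1.2 * z.2) :=
      h.cont_comp (by fun_prop) (by fun_prop)
    exact (hgm.comp hc.measurable).stronglyMeasurable
  have hm : MeasurableSet {p : (Fin N → ℝ) × ℝ |
      f p.1 - f (Φ p.1 p.2) - ∫ u in (0 : ℝ)..p.2, g (Φ p.1 u) = 0} :=
    ((hfm.comp measurable_fst).sub (hfm.comp h.cont.measurable)).sub hI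
      (measurableSet_singleton 0)
  convert (h.isOpen_stay hΩ).measurableSet.compl.union hm using 1
  ext p
  simp [imp_iff_not_or]

/-- The points whose orbit stays in `Ω` and along whose orbit the integrated equation, started
at the point itself, holds at almost every time. -/
def good (Ω : Set (Fin N → ℝ)) (Φ : (Fin N → ℝ) → ℝ → (Fin N → ℝ))
    (f g : (Fin N → ℝ) → ℝ) : Set (Fin N → ℝ) :=
  {y | (∀ s, Φ y s ∈ Ω) ∧ (∀ a b : ℝ, IntervalIntegrable (fun u => g (Φ y u)) volume a b) ∧
    ∀ᵐ ε : ℝ, f (Φ y ε) = f y - ∫ u in (0 : ℝ)..ε, g (Φ y u)}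

lemma ae_good [IsFiniteMeasureOnCompacts μ] (h : MeasureFlow Φ μ)
    {Ω : Set (Fin N → ℝ)} (hΩ : IsOpen Ω) {f g : (Fin N → ℝ) → ℝ}
    (hfg : InDomTmax Ω Φ μ f g) :
    ∀ᵐ y ∂μ, (∀ s, Φ y s ∈ Ω) → y ∈ good Ω Φ f g := by
  obtain ⟨hf, hg, hw⟩ := hfg
  -- Borel representatives of the extensions of `f` and `g` by zero
  have hf1 : Integrable (Ω.indicator f) μ := (integrable_indicator_iff hΩ.measurableSet).2 hf
  have hg1 : Integrable (Ω.indicator g) μ := (integrable_indicator_iff hΩ.measurableSet).2 hg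
  obtain ⟨f2, hf2, ef⟩ := hf1.1
  obtain ⟨g2, hg2, eg⟩ := hg1.1
  have hset : ∀ {a a2 b : (Fin N → ℝ) → ℝ}, Ω.indicator a =ᵐ[μ] a2 →
      ∫ x, a2 x * b x ∂μ = ∫ x in Ω, a x * b x ∂μ := by
    intro a a2 b e
    rw [← integral_indicator hΩ.measurableSet]
    refine integral_congr_ae ?_
    filter_upwards [e] with x hx
    rw [← hx, indicator_mul_left]
  have hi2 := hg1.congr eg
  have key := h.ae_ae_eq hΩ hf2.measurable hg2.measurable (hf1.congr ef) hi2
    (fun ψ Dψ hψ => by rw [hset eg, hset ef, hw ψ Dψ hψ])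
  filter_upwards [key, ef, h.ae_orbit ef, h.ae_orbit eg, h.ae_intervalIntegrable hi2]
    with y hy hfy hfo hgo hint hΩy
  have hgo' : (fun u => g2 (Φ y u)) =ᵐ[volume] fun u => g (Φ y u) := by
    filter_upwards [hgo] with u hu
    rw [← hu, indicator_of_mem (hΩy u)]
  have hfy' : f2 y = f y := by
    rw [← hfy, indicator_of_mem]
    simpa [h.zero] using hΩy 0
  refine ⟨hΩy, fun a b => (hint a b).congr_ae (ae_restrict_of_ae hgo'), ?_⟩
  filter_upwards [hy, hfo] with ε h1 h2
  have h3 := h1 fun v _ => hΩy _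
  rw [← h2, indicator_of_mem (hΩy ε), hfy',
    intervalIntegral.integral_congr_ae (hgo'.mono fun u hu _ => hu)] at h3
  linarith

/-! ### The representative -/

/-- Two good points on the same orbit prescribe the same value at a common point of it: both
prescriptions propagate along the orbit to `f` itself at almost every time, and one
common time suffices. -/
lemma good_unique (h : MeasureFlow Φ μ) {Ω : Set (Fin N → ℝ)} {f g : (Fin N → ℝ) → ℝ}
    {y z : Fin N → ℝ} (hy : y ∈ good Ω Φ f g) (hz : z ∈ good Ω Φ f g) {a b : ℝ}
    (hab : Φ y a = Φ z b) :
    f y - ∫ u in (0 : ℝ)..a, g (Φ y u) = f z - ∫ u in (0 : ℝ)..b, g (Φ z u) := by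
  have hv : ∀ v, Φ y (a + v) = Φ z (b + v) := fun v => by rw [← h.add, hab, h.add]
  have h1 : ∀ᵐ v : ℝ, f (Φ y (a + v)) = f y - ∫ u in (0 : ℝ)..(a + v), g (Φ y u) :=
    (measurePreserving_add_left volume a).quasiMeasurePreserving.ae hy.2.2
  have h2 : ∀ᵐ v : ℝ, f (Φ z (b + v)) = f z - ∫ u in (0 : ℝ)..(b + v), g (Φ z u) :=
    (measurePreserving_add_left volume b).quasiMeasurePreserving.ae hz.2.2
  obtain ⟨v, hv1, hv2⟩ := (h1.and h2).exists
  rw [← intervalIntegral.integral_add_adjacent_intervals (hy.2.1 0 a) (hy.2.1 a (a + v))] at hv1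
  rw [← intervalIntegral.integral_add_adjacent_intervals (hz.2.1 0 b) (hz.2.1 b (b + v))] at hv2
  have hsame : ∫ u in a..(a + v), g (Φ y u) = ∫ u in b..(b + v), g (Φ z u) := by
    have e1 := intervalIntegral.integral_comp_add_left (a := 0) (b := v) (fun u => g (Φ y u)) a
    have e2 := intervalIntegral.integral_comp_add_left (a := 0) (b := v) (fun u => g (Φ z u)) b
    rw [add_zero] at e1 e2
    rw [← e1, ← e2]
    simp only [hv]
  rw [hv v, hv2, hsame] at hv1
  linarith

open Classical in
/-- The representative of `f` obtained by integrating `-g` along the orbit from a chosen good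
point; the value `0` off the orbits of good points is arbitrary. -/
def rep (Ω : Set (Fin N → ℝ)) (Φ : (Fin N → ℝ) → ℝ → (Fin N → ℝ))
    (f g : (Fin N → ℝ) → ℝ) (x : Fin N → ℝ) : ℝ :=
  if hx : ∃ q : (Fin N → ℝ) × ℝ, q.1 ∈ good Ω Φ f g ∧ Φ q.1 q.2 = x then
    f hx.choose.1 - ∫ u in (0 : ℝ)..hx.choose.2, g (Φ hx.choose.1 u)
  else 0

lemma rep_apply (h : MeasureFlow Φ μ) {Ω : Set (Fin N → ℝ)} {f g : (Fin N → ℝ) → ℝ}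
    {y : Fin N → ℝ} (hy : y ∈ good Ω Φ f g) (a : ℝ) :
    rep Ω Φ f g (Φ y a) = f y - ∫ u in (0 : ℝ)..a, g (Φ y u) := by
  have hx : ∃ q : (Fin N → ℝ) × ℝ, q.1 ∈ good Ω Φ f g ∧ Φ q.1 q.2 = Φ y a := ⟨(y, a), hy, rfl⟩
  rw [rep, dif_pos hx]
  exact h.good_unique hx.choose_spec.1 hy hx.choose_spec.2

end MeasureFlow

/-- The points with infinite exit times in both directions are those whose whole orbit is
in `Ω`. -/
lemma mem_iff_orbit {N : ℕ} {Ω : Set (Fin N → ℝ)} {Φ : (Fin N → ℝ) → ℝ → (Fin N → ℝ)}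
    (hΦ0 : ∀ x, Φ x 0 = x) (x : Fin N → ℝ) :
    x ∈ {x ∈ Ω | tauM Ω Φ x = ⊤ ∧ tauP Ω Φ x = ⊤} ↔ ∀ s, Φ x s ∈ Ω := by
  have hM : tauM Ω Φ x = ⊤ ↔ ∀ r, 0 < r → Φ x (-r) ∈ Ω := by
    rw [tauM, sInf_eq_top]
    constructor
    · intro hall r hr
      by_contra hn
      exact ENNReal.ofReal_ne_top (hall _ ⟨r, hr, rfl, hn⟩)
    · rintro hall _ ⟨r, hr, rfl, hn⟩
      exact absurd (hall r hr) hn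
  have hP : tauP Ω Φ x = ⊤ ↔ ∀ r, 0 < r → Φ x r ∈ Ω := by
    rw [tauP, sInf_eq_top]
    constructor
    · intro hall r hr
      by_contra hn
      exact ENNReal.ofReal_ne_top (hall _ ⟨r, hr, rfl, hn⟩)
    · rintro hall _ ⟨r, hr, rfl, hn⟩
      exact absurd (hall r hr) hn
  rw [mem_ofPred_eq, hM, hP]
  constructor
  · rintro ⟨h0, hm, hp⟩ s
    rcases lt_trichotomy s 0 with hs | rfl | hs
    · simpa using hm (-s) (by linarith)
    · rwa [hΦ0]
    · exact hp s hs
  · intro hall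
    exact ⟨by simpa [hΦ0] using hall 0, fun r _ => hall _, fun r _ => hall _⟩

theorem stmt_14
    {N : ℕ} (hN : 1 ≤ N) (κ : ℝ≥0) (hκ : 0 < κ)
    (F : (Fin N → ℝ) → (Fin N → ℝ)) (hF : LipschitzWith κ F)
    (Φ : (Fin N → ℝ) → ℝ → (Fin N → ℝ))
    (hΦ0 : ∀ x, Φ x 0 = x)
    (hΦ' : ∀ x s, HasDerivAt (Φ x) (F (Φ x s)) s)
    (Ω : Set (Fin N → ℝ)) (hΩ : IsOpen Ω)
    (μ : Measure (Fin N → ℝ)) [IsFiniteMeasureOnCompacts μ]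
    (hinv : ∀ (A : Set (Fin N → ℝ)) (t : ℝ), MeasurableSet A →
      μ ((fun x => Φ x t) '' A) = μ A)
    (f g : (Fin N → ℝ) → ℝ) (hfg : InDomTmax Ω Φ μ f g) :
    ∃ O : Set (Fin N → ℝ), O ⊆ {x ∈ Ω | tauM Ω Φ x = ⊤ ∧ tauP Ω Φ x = ⊤} ∧ μ O = 0 ∧
      ∃ ft : (Fin N → ℝ) → ℝ,
        ft =ᵐ[μ.restrict {x ∈ Ω | tauM Ω Φ x = ⊤ ∧ tauP Ω Φ x = ⊤}] f ∧
        ∀ x ∈ {x ∈ Ω | tauM Ω Φ x = ⊤ ∧ tauP Ω Φ x = ⊤} \ O, ∀ s t : ℝ, s < t →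
          ft (Φ x s) - ft (Φ x t) = ∫ r in s..t, g (Φ x r) := by
  have h : MeasureFlow Φ μ := MeasureFlow.of_lipschitz hF hΦ0 hΦ' hinv
  set W := {x ∈ Ω | tauM Ω Φ x = ⊤ ∧ tauP Ω Φ x = ⊤} with hW
  have hmem : ∀ x, x ∈ W ↔ ∀ s, Φ x s ∈ Ω := mem_iff_orbit hΦ0
  have hae := h.ae_good hΩ hfg
  have hgood : ∀ x ∈ W \ (W \ MeasureFlow.good Ω Φ f g), x ∈ MeasureFlow.good Ω Φ f g :=
    fun x hx => by_contra fun hn => hx.2 ⟨hx.1, hn⟩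
  have hnull : μ (W \ MeasureFlow.good Ω Φ f g) = 0 := by
    refine measure_mono_null (fun x hx => ?_) (ae_iff.1 hae)
    exact fun himp => hx.2 (himp ((hmem x).1 hx.1))
  refine ⟨W \ MeasureFlow.good Ω Φ f g, sdiff_subset, hnull, MeasureFlow.rep Ω Φ f g, ?_, ?_⟩
  · have hWm : MeasurableSet W := by
      rw [show W = {x | ∀ s, Φ x s ∈ Ω} from Set.ext hmem]
      exact h.measurableSet_orbit hΩ
    have hsub : ∀ᵐ x ∂μ.restrict W, x ∈ MeasureFlow.good Ω Φ f g := by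
      rw [ae_restrict_iff' hWm]
      filter_upwards [hae] with x hx hxW using hx ((hmem x).1 hxW)
    filter_upwards [hsub] with x hx
    simpa [h.zero] using h.rep_apply hx 0
  · intro x hx s t _
    have hx' := hgood x hx
    rw [h.rep_apply hx' s, h.rep_apply hx' t,
      ← intervalIntegral.integral_add_adjacent_intervals (hx'.2.1 0 s) (hx'.2.1 s t)]
    ring

end
end

section
/- Let f ∈ L¹(Ω,μ). The following are equivalent: (1) there exist g ∈ L¹(Ω,μ) and a representative f♯ of f (i.e. f♯ = f μ-almost everywhere) such that for μ-almost every x ∈ Ω and all −τ−(x) < t₁ ≤ t₂ < τ+(x), f♯(Φ(x,t₁)) − f♯(Φ(x,t₂)) = ∫_{t₁}^{t₂} g(Φ(x,s)) ds; (2) f ∈ D(T_max). Moreover, in this case g = T_max f. -/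
/-!
The flow `Φ` is jointly continuous (Grönwall), is an `ℝ`-action, and each `Φ(·,t)` preserves `μ`.
Hence `(t, x) ↦ (t, Φ(x,t))` preserves Lebesgue measure times `μ`, so null sets of `μ` are met by
almost every trajectory only at a null set of times, and an integrable function is locally
integrable along almost every trajectory. Replacing `f` and `g` by measurable representatives
vanishing off `Ω`, all integrals can be taken over the whole space.

From the weak equation to the representative (`flowRep_eq_of_weak`): fix `t` and let `χ` be smooth
with compact support in the open set of points whose trajectory stays in `Ω` between the times `0`
and `t`. Then `ψ(y) = ∫₀ᵗ χ(Φ(y,-s)) ds` is a test function with `Dψ(y) = χ(y) - χ(Φ(y,-t))`, and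
by Fubini and invariance the weak equation for `ψ` reads
`∫ χ(x) (f(x) - f(Φ(x,t)) - ∫₀ᵗ g(Φ(x,s)) ds) dμ(x) = 0`. As `χ` varies this gives the integrated
equation for almost every `x` (`ae_eq_of_weak`), and by Fubini for almost every `x` and almost every
`t`. So for almost every `x` the function `f(Φ(x,·))` agrees a.e. on `(-τ₋(x), τ₊(x))` with a
continuous function; its value at each time is recovered, in a way that depends only on the point
`Φ(x,t)`, as the derivative of the primitive of `f` along the trajectory (`flowRep`).

From the representative to the weak equation (`weak_of_rep`): let `ψ` be a test function supported
in a compact `K ⊆ Ω` and let `δ > 0` be so small that trajectories meeting `K` during `[0,δ]` stay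
in `Ω` around that interval. Along almost every trajectory, integration by parts gives
`∫₀^δ (gψ - f Dψ)(Φ(x,s)) ds = (fψ)(x) - (fψ)(Φ(x,δ))`. Integrating in `x`, invariance of `μ` turns
the left side into `δ ∫ (gψ - f Dψ) dμ` and the right side into `0`.
-/

open MeasureTheory Set Filter Topology
open scoped ENNReal NNReal

noncomputable section

/-! ### The flow and invariance -/

/-- A continuous flow (group action of `ℝ`) whose time-`t` maps preserve `μ`. -/
structure InvFlow {N : ℕ} (Φ : (Fin N → ℝ) → ℝ → (Fin N → ℝ))
    (μ : Measure (Fin N → ℝ)) : Prop where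
  zero : ∀ x, Φ x 0 = x
  add : ∀ x s t, Φ (Φ x s) t = Φ x (s + t)
  cont : Continuous fun p : (Fin N → ℝ) × ℝ => Φ p.1 p.2
  mp : ∀ t, MeasurePreserving (fun x => Φ x t) μ μ

lemma flow_dist_le_of_nonneg {N : ℕ} {κ : ℝ≥0} {F : (Fin N → ℝ) → (Fin N → ℝ)}
    (hF : LipschitzWith κ F) {u v : ℝ → (Fin N → ℝ)}
    (hu : ∀ s, HasDerivAt u (F (u s)) s) (hv : ∀ s, HasDerivAt v (F (v s)) s)
    {t : ℝ} (ht : 0 ≤ t) :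
    dist (u t) (v t) ≤ dist (u 0) (v 0) * Real.exp (κ * t) := by
  have := dist_le_of_trajectories_ODE (v := fun _ => F) (K := κ) (f := u) (g := v) (a := 0) (b := t)
    (δ := dist (u 0) (v 0)) (fun _ => hF)
    (fun s _ => (hu s).continuousAt.continuousWithinAt) (fun s _ => (hu s).hasDerivWithinAt)
    (fun s _ => (hv s).continuousAt.continuousWithinAt) (fun s _ => (hv s).hasDerivWithinAt)
    le_rfl t ⟨ht, le_rfl⟩
  simpa using this

lemma flow_dist_le {N : ℕ} {κ : ℝ≥0} {F : (Fin N → ℝ) → (Fin N → ℝ)}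
    (hF : LipschitzWith κ F) {u v : ℝ → (Fin N → ℝ)}
    (hu : ∀ s, HasDerivAt u (F (u s)) s) (hv : ∀ s, HasDerivAt v (F (v s)) s) (t : ℝ) :
    dist (u t) (v t) ≤ dist (u 0) (v 0) * Real.exp (κ * |t|) := by
  rcases le_total 0 t with ht | ht
  · rw [abs_of_nonneg ht]
    exact flow_dist_le_of_nonneg hF hu hv ht
  · -- time reversal: `s ↦ u (-s)` is a trajectory of `-F`
    have key : ∀ w : ℝ → (Fin N → ℝ), (∀ s, HasDerivAt w (F (w s)) s) →
        ∀ s, HasDerivAt (fun s => w (-s)) ((fun x => - F x) (w (-s))) s := by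
      intro w hw s
      have := (hw (-s)).scomp s (hasDerivAt_neg s)
      rw [neg_smul, one_smul] at this
      exact this
    have hF' : LipschitzWith κ (fun x => - F x) := by
      intro x y
      simpa using hF x y
    have := flow_dist_le_of_nonneg hF' (key u hu) (key v hv) (t := -t) (by linarith)
    rw [abs_of_nonpos ht]
    simpa using this

lemma invFlow_of_ode {N : ℕ} {κ : ℝ≥0} {F : (Fin N → ℝ) → (Fin N → ℝ)}
    (hF : LipschitzWith κ F) {Φ : (Fin N → ℝ) → ℝ → (Fin N → ℝ)}
    (hΦ0 : ∀ x, Φ x 0 = x) (hΦ' : ∀ x s, HasDerivAt (Φ x) (F (Φ x s)) s)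
    {μ : Measure (Fin N → ℝ)}
    (hinv : ∀ (A : Set (Fin N → ℝ)) (t : ℝ), MeasurableSet A →
      μ ((fun x => Φ x t) '' A) = μ A) : InvFlow Φ μ := by
  have hadd : ∀ x s t, Φ (Φ x s) t = Φ x (s + t) := by
    intro x s t
    have : Φ (Φ x s) = fun t => Φ x (s + t) := by
      refine ODE_solution_unique_univ (v := fun _ => F) (K := κ) (s := fun _ => univ) (t₀ := 0)
        (fun _ => hF.lipschitzOnWith) (fun t => ⟨hΦ' _ t, mem_univ _⟩) (fun t => ⟨?_, mem_univ _⟩)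
        (by simp [hΦ0])
      exact (hΦ' x (s + t)).comp_const_add s t
    exact congrFun this t
  have hcont : Continuous fun p : (Fin N → ℝ) × ℝ => Φ p.1 p.2 := by
    rw [continuous_iff_continuousAt]
    rintro ⟨x₀, t₀⟩
    have h1 : Tendsto (fun p : (Fin N → ℝ) × ℝ =>
        dist p.1 x₀ * Real.exp (κ * |p.2|) + dist (Φ x₀ p.2) (Φ x₀ t₀)) (𝓝 (x₀, t₀)) (𝓝 0) := by
      have hc : Continuous (Φ x₀) :=
        continuous_iff_continuousAt.2 fun s => (hΦ' x₀ s).continuousAt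
      have : Continuous (fun p : (Fin N → ℝ) × ℝ =>
        dist p.1 x₀ * Real.exp (κ * |p.2|) + dist (Φ x₀ p.2) (Φ x₀ t₀)) := by fun_prop
      simpa using this.tendsto (x₀, t₀)
    refine tendsto_iff_dist_tendsto_zero.2 (squeeze_zero (fun _ => dist_nonneg) ?_ h1)
    rintro ⟨x, t⟩
    have := flow_dist_le hF (hΦ' x) (hΦ' x₀) t
    rw [hΦ0, hΦ0] at this
    exact (dist_triangle _ (Φ x₀ t) _).trans (by gcongr)
  have hct : ∀ t, Continuous fun x => Φ x t := fun t =>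
    hcont.comp (continuous_id.prodMk continuous_const)
  refine ⟨hΦ0, hadd, hcont, fun t => ⟨(hct t).measurable, ?_⟩⟩
  ext A hA
  rw [Measure.map_apply (hct t).measurable hA, ← hinv A (-t) hA]
  congr 1
  ext x
  constructor
  · intro hx
    exact ⟨Φ x t, hx, by simp [hadd, hΦ0]⟩
  · rintro ⟨y, hy, rfl⟩
    simpa [hadd, hΦ0] using hy

namespace InvFlow

variable {N : ℕ} {Φ : (Fin N → ℝ) → ℝ → (Fin N → ℝ)} {μ : Measure (Fin N → ℝ)}

lemma continuous_left (h : InvFlow Φ μ) (t : ℝ) : Continuous fun x => Φ x t :=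
  h.cont.comp (continuous_id.prodMk continuous_const)

lemma continuous_right (h : InvFlow Φ μ) (x : Fin N → ℝ) : Continuous (Φ x) :=
  h.cont.comp (continuous_const.prodMk continuous_id)

lemma neg_cancel (h : InvFlow Φ μ) (x : Fin N → ℝ) (t : ℝ) : Φ (Φ x (-t)) t = x := by
  simp [h.add, h.zero]

lemma cancel_neg (h : InvFlow Φ μ) (x : Fin N → ℝ) (t : ℝ) : Φ (Φ x t) (-t) = x := by
  simp [h.add, h.zero]

lemma integral_comp (h : InvFlow Φ μ) (t : ℝ) (u : (Fin N → ℝ) → ℝ) :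
    ∫ x, u (Φ x t) ∂μ = ∫ x, u x ∂μ := by
  let e : (Fin N → ℝ) ≃ₜ (Fin N → ℝ) :=
    { toFun := fun x => Φ x t
      invFun := fun x => Φ x (-t)
      left_inv := fun x => h.cancel_neg x t
      right_inv := fun x => h.neg_cancel x t
      continuous_toFun := h.continuous_left t
      continuous_invFun := h.continuous_left (-t) }
  exact (h.mp t).integral_comp e.measurableEmbedding u

lemma skew (h : InvFlow Φ μ) [IsFiniteMeasureOnCompacts μ] (ν : Measure ℝ) [SFinite ν] :
    MeasurePreserving (fun p : ℝ × (Fin N → ℝ) => (p.1, Φ p.2 p.1)) (ν.prod μ) (ν.prod μ) :=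
  (MeasurePreserving.id ν).skew_product (g := fun t x => Φ x t)
    (h.cont.comp continuous_swap).measurable (Eventually.of_forall fun t => (h.mp t).map_eq)

lemma integrable_skew (h : InvFlow Φ μ) [IsFiniteMeasureOnCompacts μ]
    (ν : Measure ℝ) [IsFiniteMeasure ν] {u : (Fin N → ℝ) → ℝ} (hu : Integrable u μ) :
    Integrable (fun p : ℝ × (Fin N → ℝ) => u (Φ p.2 p.1)) (ν.prod μ) :=
  ((h.skew ν).integrable_comp (hu.comp_snd ν).aestronglyMeasurable).2 (hu.comp_snd ν)

/-- A `μ`-null condition holds at almost every time of almost every trajectory. -/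
lemma ae_ae (h : InvFlow Φ μ) [IsFiniteMeasureOnCompacts μ] {p : (Fin N → ℝ) → Prop}
    (hp : ∀ᵐ x ∂μ, p x) : ∀ᵐ x ∂μ, ∀ᵐ t : ℝ, p (Φ x t) := by
  have h1 : ∀ᵐ q ∂((volume : Measure ℝ).prod μ), p (Φ q.2 q.1) :=
    (Measure.quasiMeasurePreserving_snd.comp (h.skew volume).quasiMeasurePreserving).ae hp
  have h2 : ∀ᵐ q ∂(μ.prod (volume : Measure ℝ)), p (Φ q.1 q.2) :=
    Measure.measurePreserving_swap.quasiMeasurePreserving.ae h1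
  exact Measure.ae_ae_of_ae_prod h2

/-- An integrable function is locally integrable along almost every trajectory. -/
lemma ae_intervalIntegrable (h : InvFlow Φ μ) [IsFiniteMeasureOnCompacts μ]
    {u : (Fin N → ℝ) → ℝ} (hu : Integrable u μ) :
    ∀ᵐ x ∂μ, ∀ a b : ℝ, IntervalIntegrable (fun s => u (Φ x s)) volume a b := by
  have h1 : ∀ n : ℕ, ∀ᵐ x ∂μ, IntegrableOn (fun s => u (Φ x s)) (Icc (-(n : ℝ)) n) volume := by
    intro n
    have := (h.integrable_skew (volume.restrict (Icc (-(n : ℝ)) n)) hu).prod_left_ae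
    exact this
  filter_upwards [ae_all_iff.2 h1] with x hx a b
  obtain ⟨n, hn⟩ := exists_nat_ge (max |a| |b|)
  rw [max_le_iff, abs_le, abs_le] at hn
  refine ((hx n).mono_set ?_).intervalIntegrable
  exact uIcc_subset_Icc ⟨hn.1.1, hn.1.2⟩ ⟨hn.2.1, hn.2.2⟩

end InvFlow

/-! ### Testing against averages along trajectories -/

/-- The test functions used to extract the integrated equation. Along a trajectory the integral is
`r ↦ ∫_{r-t}^r χ(Φ(y,u)) du`, which is continuously differentiable because `χ` is continuous; `t` may
be negative. -/
lemma isTestFun_curveAverage {N : ℕ} {Φ : (Fin N → ℝ) → ℝ → (Fin N → ℝ)}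
    {μ : Measure (Fin N → ℝ)} (h : InvFlow Φ μ) {Ω : Set (Fin N → ℝ)} (t : ℝ)
    {χ : (Fin N → ℝ) → ℝ} (hχ : Continuous χ) (hsupp : HasCompactSupport χ)
    (hsub : tsupport χ ⊆ {x | ∀ s ∈ uIcc 0 t, Φ x s ∈ Ω}) :
    IsTestFun Ω Φ (fun y => ∫ s in (0 : ℝ)..t, χ (Φ y (-s)))
      (fun y => χ y - χ (Φ y (-t))) := by
  obtain ⟨M, hM⟩ := hsupp.exists_bound_of_continuous hχ
  have hder : ∀ x r, HasDerivAt (fun r => ∫ s in (0 : ℝ)..t, χ (Φ (Φ x r) (-s)))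
      (χ (Φ x r) - χ (Φ x (r - t))) r := by
    intro x r
    have hc : Continuous fun u => χ (Φ x u) := hχ.comp (h.continuous_right x)
    have h1 : (fun r => ∫ s in (0 : ℝ)..t, χ (Φ (Φ x r) (-s)))
        = fun r => (∫ u in (0 : ℝ)..r, χ (Φ x u)) - ∫ u in (0 : ℝ)..(r - t), χ (Φ x u) := by
      ext r
      have : ∀ s, Φ (Φ x r) (-s) = Φ x (r - s) := fun s => by rw [h.add, sub_eq_add_neg]
      simp only [this]
      rw [intervalIntegral.integral_comp_sub_left (fun u => χ (Φ x u)) r, sub_zero,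
        intervalIntegral.integral_interval_sub_left (hc.intervalIntegrable _ _)
          (hc.intervalIntegrable _ _)]
    rw [h1]
    exact (hc.integral_hasStrictDerivAt 0 r).hasDerivAt.sub
      (((hc.integral_hasStrictDerivAt 0 (r - t)).hasDerivAt).comp_sub_const r t)
  refine ⟨?_, ⟨M * |t|, fun x => ?_⟩, ⟨(fun p : (Fin N → ℝ) × ℝ => Φ p.1 p.2) ''
    (tsupport χ ×ˢ uIcc 0 t), ?_, ?_, ?_⟩, ?_, ?_, ?_, ⟨M + M, fun x => ?_⟩⟩
  · refine Continuous.measurable ?_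
    refine intervalIntegral.continuous_parametric_intervalIntegral_of_continuous' ?_ 0 t
    exact hχ.comp (h.cont.comp (continuous_fst.prodMk continuous_snd.neg))
  · have := intervalIntegral.norm_integral_le_of_norm_le_const (a := 0) (b := t)
      (f := fun s => χ (Φ x (-s))) (C := M) (fun s _ => hM _)
    simpa using this
  · exact (IsCompact.prod hsupp isCompact_uIcc).image h.cont
  · rintro _ ⟨⟨x, s⟩, ⟨hx, hs⟩, rfl⟩
    exact hsub hx s hs
  · intro y hy
    have : ∀ s ∈ uIcc 0 t, χ (Φ y (-s)) = 0 := by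
      intro s hs
      by_contra hne
      exact hy ⟨(Φ y (-s), s), ⟨subset_tsupport _ hne, hs⟩, h.neg_cancel y s⟩
    rw [intervalIntegral.integral_congr this]
    simp
  · intro x _
    refine ContDiff.contDiffOn (contDiff_one_iff_deriv.2
      ⟨fun r => (hder x r).differentiableAt, ?_⟩)
    rw [funext fun r => (hder x r).deriv]
    have hc : Continuous fun u => χ (Φ x u) := hχ.comp (h.continuous_right x)
    exact hc.sub (hc.comp (continuous_id.sub continuous_const))
  · intro x _
    have := hder x 0
    simpa [h.zero] using this
  · exact (hχ.sub (hχ.comp (h.continuous_left _))).measurable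
  · exact (abs_sub _ _).trans (add_le_add (hM _) (hM _))

/-- The set of pairs `(x, t)` such that the trajectory of `x` stays in the open set `Ω` between the
times `0` and `t` is open. -/
lemma isOpen_segment {N : ℕ} {Φ : (Fin N → ℝ) → ℝ → (Fin N → ℝ)}
    {μ : Measure (Fin N → ℝ)} (h : InvFlow Φ μ) {Ω : Set (Fin N → ℝ)} (hΩ : IsOpen Ω) :
    IsOpen {q : (Fin N → ℝ) × ℝ | ∀ s ∈ uIcc 0 q.2, Φ q.1 s ∈ Ω} := by
  have heq : {q : (Fin N → ℝ) × ℝ | ∀ s ∈ uIcc 0 q.2, Φ q.1 s ∈ Ω}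
      = {q | ∀ r ∈ Icc (0 : ℝ) 1, Φ q.1 (r * q.2) ∈ Ω} := by
    ext ⟨x, t⟩
    have : uIcc 0 t = (fun r => r * t) '' Icc (0 : ℝ) 1 := by
      rw [← segment_eq_uIcc, segment_eq_image]
      simp
    simp only [mem_ofPred_eq, this, forall_mem_image]
  rw [heq, isOpen_iff_eventually]
  intro q hq
  refine isCompact_Icc.eventually_forall_of_forall_eventually fun r hr => ?_
  have hc : Continuous fun z : ((Fin N → ℝ) × ℝ) × ℝ => Φ z.1.1 (z.2 * z.1.2) :=
    h.cont.comp ((continuous_fst.comp continuous_fst).prodMk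
      (continuous_snd.mul (continuous_snd.comp continuous_fst)))
  exact hc.continuousAt.eventually (hΩ.mem_nhds (hq r hr))

lemma isFiniteMeasure_uIoc (t : ℝ) :
    IsFiniteMeasure ((volume : Measure ℝ).restrict (uIoc 0 t)) :=
  ⟨by rw [uIoc, Measure.restrict_apply_univ]; exact measure_Ioc_lt_top⟩

lemma integrable_curveIntegral {N : ℕ} {Φ : (Fin N → ℝ) → ℝ → (Fin N → ℝ)}
    {μ : Measure (Fin N → ℝ)} [IsFiniteMeasureOnCompacts μ] (h : InvFlow Φ μ)
    {g : (Fin N → ℝ) → ℝ} (hg : Integrable g μ) (t : ℝ) :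
    Integrable (fun x => ∫ s in (0 : ℝ)..t, g (Φ x s)) μ := by
  simp only [intervalIntegral.intervalIntegral_eq_integral_uIoc]
  have := isFiniteMeasure_uIoc t
  refine Integrable.smul (if (0 : ℝ) ≤ t then (1 : ℝ) else -1) ?_
  exact (h.integrable_skew (volume.restrict (uIoc 0 t)) hg).integral_prod_right

/-- Testing the weak equation against averages `∫₀ᵗ χ(Φ(·,-s)) ds` shows that the integrated
equation holds a.e., for each fixed time increment `t`. -/
lemma ae_eq_of_weak {N : ℕ} {Φ : (Fin N → ℝ) → ℝ → (Fin N → ℝ)}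
    {μ : Measure (Fin N → ℝ)} [IsFiniteMeasureOnCompacts μ] (h : InvFlow Φ μ)
    {Ω : Set (Fin N → ℝ)} (hΩ : IsOpen Ω) {f g : (Fin N → ℝ) → ℝ}
    (hf : Integrable f μ) (hg : Integrable g μ)
    (hw : ∀ ψ Dψ, IsTestFun Ω Φ ψ Dψ → ∫ x, g x * ψ x ∂μ = ∫ x, f x * Dψ x ∂μ) (t : ℝ) :
    ∀ᵐ x ∂μ, (∀ s ∈ uIcc 0 t, Φ x s ∈ Ω) →
      f x - f (Φ x t) = ∫ s in (0 : ℝ)..t, g (Φ x s) := by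
  set G : (Fin N → ℝ) → ℝ := fun x => ∫ s in (0 : ℝ)..t, g (Φ x s) with hG
  have hGi : Integrable G μ := integrable_curveIntegral h hg t
  have hft : Integrable (fun x => f (Φ x t)) μ :=
    ((h.mp t).integrable_comp hf.aestronglyMeasurable).2 hf
  have hH : Integrable (fun x => f x - f (Φ x t) - G x) μ := (hf.sub hft).sub hGi
  have hU : IsOpen {x | ∀ s ∈ uIcc 0 t, Φ x s ∈ Ω} :=
    (isOpen_segment h hΩ).preimage (continuous_id.prodMk continuous_const : Continuous
      fun x : Fin N → ℝ => (x, t))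
  have := hU.ae_eq_zero_of_integral_contDiff_smul_eq_zero
    (hH.locallyIntegrable.locallyIntegrableOn _) (μ := μ) ?_
  · filter_upwards [this] with x hx hs
    exact sub_eq_zero.1 (hx hs)
  intro χ hχd hsupp hsub
  have hχ : Continuous χ := hχd.continuous
  obtain ⟨M, hM⟩ := hsupp.exists_bound_of_continuous hχ
  have hbdd : ∀ {u v : (Fin N → ℝ) → ℝ}, Integrable u μ → Continuous v → (∀ x, ‖v x‖ ≤ M) →
      Integrable (fun x => u x * v x) μ := fun hu hv hb =>
    hu.mul_bdd hv.aestronglyMeasurable (Eventually.of_forall hb)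
  have hχt : ∀ r, Continuous fun x => χ (Φ x r) := fun r => hχ.comp (h.continuous_left r)
  have e1 := hw _ _ (isTestFun_curveAverage h t hχ hsupp hsub)
  have e2 : ∫ x, f x * (χ x - χ (Φ x (-t))) ∂μ = ∫ x, f x * χ x - f (Φ x t) * χ x ∂μ := by
    have a1 : ∫ x, f x * χ (Φ x (-t)) ∂μ = ∫ x, f (Φ x t) * χ x ∂μ := by
      rw [← h.integral_comp t]
      simp only [h.cancel_neg]
    simp only [mul_sub]
    rw [integral_sub (hbdd hf hχ hM) (hbdd hf (hχt _) fun _ => hM _),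
      integral_sub (hbdd hf hχ hM) (hbdd hft hχ hM), a1]
  have e3 : ∫ x, g x * (∫ s in (0 : ℝ)..t, χ (Φ x (-s))) ∂μ = ∫ x, G x * χ x ∂μ := by
    have := isFiniteMeasure_uIoc t
    have i1 : Integrable (Function.uncurry fun (s : ℝ) x => g x * χ (Φ x (-s)))
        ((volume.restrict (uIoc 0 t)).prod μ) := by
      have hc : Continuous fun p : ℝ × (Fin N → ℝ) => χ (Φ p.2 (-p.1)) :=
        hχ.comp (h.cont.comp (continuous_snd.prodMk continuous_fst.neg))
      exact (hg.comp_snd (volume.restrict (uIoc 0 t))).mul_bdd (c := M)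
        hc.aestronglyMeasurable (Eventually.of_forall fun _ => hM _)
    have i2 : Integrable (Function.uncurry fun (s : ℝ) x => g (Φ x s) * χ x)
        ((volume.restrict (uIoc 0 t)).prod μ) := by
      have hc : Continuous fun p : ℝ × (Fin N → ℝ) => χ p.2 := hχ.comp continuous_snd
      exact (h.integrable_skew (volume.restrict (uIoc 0 t)) hg).mul_bdd (c := M)
        hc.aestronglyMeasurable (Eventually.of_forall fun _ => hM _)
    simp only [hG, ← intervalIntegral.integral_const_mul, ← intervalIntegral.integral_mul_const]
    rw [← intervalIntegral_integral_swap i1, ← intervalIntegral_integral_swap i2]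
    congr 1
    ext s
    rw [← h.integral_comp s]
    simp only [h.cancel_neg]
  rw [e2, e3] at e1
  have : ∀ x, χ x • (f x - f (Φ x t) - G x) = (f x * χ x - f (Φ x t) * χ x) - G x * χ x := by
    intro x
    simp only [smul_eq_mul]
    ring
  simp only [this]
  have e4 : Integrable (fun x => f x * χ x - f (Φ x t) * χ x) μ :=
    (hbdd hf hχ hM).sub (hbdd hft hχ hM)
  rw [integral_sub e4 (hbdd hGi hχ hM), e1, sub_self]

/-- `ae_eq_of_weak` with the quantifiers exchanged by Fubini's theorem. -/
lemma ae_ae_eq_of_weak {N : ℕ} {Φ : (Fin N → ℝ) → ℝ → (Fin N → ℝ)}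
    {μ : Measure (Fin N → ℝ)} [IsFiniteMeasureOnCompacts μ] (h : InvFlow Φ μ)
    {Ω : Set (Fin N → ℝ)} (hΩ : IsOpen Ω) {f g : (Fin N → ℝ) → ℝ}
    (hfm : Measurable f) (hgm : Measurable g)
    (hf : Integrable f μ) (hg : Integrable g μ)
    (hw : ∀ ψ Dψ, IsTestFun Ω Φ ψ Dψ → ∫ x, g x * ψ x ∂μ = ∫ x, f x * Dψ x ∂μ) :
    ∀ᵐ x ∂μ, ∀ᵐ t : ℝ, (∀ s ∈ uIcc 0 t, Φ x s ∈ Ω) →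
      f x - f (Φ x t) = ∫ s in (0 : ℝ)..t, g (Φ x s) := by
  have hGm : Measurable fun q : (Fin N → ℝ) × ℝ => ∫ s in (0 : ℝ)..q.2, g (Φ q.1 s) := by
    -- rescaling to the fixed interval `(0,1]` makes this a parametric integral
    have heq : (fun q : (Fin N → ℝ) × ℝ => ∫ s in (0 : ℝ)..q.2, g (Φ q.1 s))
        = fun q => q.2 * ∫ r in Ioc (0 : ℝ) 1, g (Φ q.1 (q.2 * r)) := by
      ext q
      rw [← intervalIntegral.integral_of_le zero_le_one]
      have := intervalIntegral.smul_integral_comp_mul_left (a := 0) (b := 1)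
        (fun s => g (Φ q.1 s)) q.2
      simpa using this.symm
    rw [heq]
    have hm : Measurable fun z : ((Fin N → ℝ) × ℝ) × ℝ => g (Φ z.1.1 (z.1.2 * z.2)) :=
      hgm.comp (h.cont.comp ((continuous_fst.comp continuous_fst).prodMk
        ((continuous_snd.comp continuous_fst).mul continuous_snd))).measurable
    exact measurable_snd.mul (hm.stronglyMeasurable.integral_prod_right').measurable
  have hS : MeasurableSet {q : (Fin N → ℝ) × ℝ | (∀ s ∈ uIcc 0 q.2, Φ q.1 s ∈ Ω) →
      f q.1 - f (Φ q.1 q.2) = ∫ s in (0 : ℝ)..q.2, g (Φ q.1 s)} := by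
    have h1 := (isOpen_segment h hΩ).measurableSet
    have h2 : MeasurableSet {q : (Fin N → ℝ) × ℝ |
        f q.1 - f (Φ q.1 q.2) = ∫ s in (0 : ℝ)..q.2, g (Φ q.1 s)} :=
      measurableSet_eq_fun ((hfm.comp measurable_fst).sub (hfm.comp h.cont.measurable)) hGm
    exact h1.imp h2
  exact (Measure.ae_ae_comm hS).2 (Eventually.of_forall fun t => ae_eq_of_weak h hΩ hf hg hw t)

/-! ### Exit times -/

/-- The interval `(-τ₋(x), τ₊(x))` of times before exit from `Ω` in either direction. -/
def lifeSpan {N : ℕ} (Ω : Set (Fin N → ℝ)) (Φ : (Fin N → ℝ) → ℝ → (Fin N → ℝ))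
    (x : Fin N → ℝ) : Set ℝ :=
  {s : ℝ | ENNReal.ofReal s < tauP Ω Φ x ∧ ENNReal.ofReal (-s) < tauM Ω Φ x}

lemma isOpen_lifeSpan {N : ℕ} (Ω : Set (Fin N → ℝ)) (Φ : (Fin N → ℝ) → ℝ → (Fin N → ℝ))
    (x : Fin N → ℝ) : IsOpen (lifeSpan Ω Φ x) :=
  (isOpen_lt ENNReal.continuous_ofReal continuous_const).inter
    (isOpen_lt (ENNReal.continuous_ofReal.comp continuous_neg) continuous_const)

lemma lifeSpan_of_mem_Icc {N : ℕ} {Ω : Set (Fin N → ℝ)} {Φ : (Fin N → ℝ) → ℝ → (Fin N → ℝ)}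
    {x : Fin N → ℝ} {a b s : ℝ} (ha : ENNReal.ofReal (-a) < tauM Ω Φ x)
    (hb : ENNReal.ofReal b < tauP Ω Φ x) (hs : s ∈ Icc a b) : s ∈ lifeSpan Ω Φ x :=
  ⟨(ENNReal.ofReal_le_ofReal hs.2).trans_lt hb,
    (ENNReal.ofReal_le_ofReal (neg_le_neg hs.1)).trans_lt ha⟩

lemma zero_mem_lifeSpan {N : ℕ} {Ω : Set (Fin N → ℝ)} {Φ : (Fin N → ℝ) → ℝ → (Fin N → ℝ)}
    {x : Fin N → ℝ} {t : ℝ} (ht : t ∈ lifeSpan Ω Φ x) : (0 : ℝ) ∈ lifeSpan Ω Φ x :=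
  ⟨by simpa using zero_le.trans_lt ht.1, by simpa using zero_le.trans_lt ht.2⟩

lemma lifeSpan_of_mem_uIcc {N : ℕ} {Ω : Set (Fin N → ℝ)}
    {Φ : (Fin N → ℝ) → ℝ → (Fin N → ℝ)} {x : Fin N → ℝ} {s t : ℝ}
    (ht : t ∈ lifeSpan Ω Φ x) (hs : s ∈ uIcc 0 t) : s ∈ lifeSpan Ω Φ x := by
  rcases le_total 0 t with h | h
  · rw [uIcc_of_le h] at hs
    exact lifeSpan_of_mem_Icc (zero_mem_lifeSpan ht).2 ht.1 hs
  · rw [uIcc_of_ge h] at hs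
    exact lifeSpan_of_mem_Icc ht.2 (zero_mem_lifeSpan ht).1 hs

lemma mem_of_lifeSpan {N : ℕ} {Ω : Set (Fin N → ℝ)} {Φ : (Fin N → ℝ) → ℝ → (Fin N → ℝ)}
    {x : Fin N → ℝ} (h0 : Φ x 0 = x) (hx : x ∈ Ω) {s : ℝ} (hs : s ∈ lifeSpan Ω Φ x) :
    Φ x s ∈ Ω := by
  by_contra hne
  rcases lt_trichotomy s 0 with h | rfl | h
  · exact absurd hs.2 (not_lt.2 (sInf_le ⟨-s, by linarith, rfl, by simpa using hne⟩))
  · exact hne (by rwa [h0])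
  · exact absurd hs.1 (not_lt.2 (sInf_le ⟨s, h, rfl, hne⟩))

/-! ### The precise representative -/

/-- The precise representative of `f` along trajectories: its value at `y` is the derivative at
time `0` of `r ↦ ∫₀ʳ f(Φ(y,u)) du`. It depends only on `f` up to null sets of times. -/
def flowRep {N : ℕ} (Φ : (Fin N → ℝ) → ℝ → (Fin N → ℝ)) (f : (Fin N → ℝ) → ℝ)
    (y : Fin N → ℝ) : ℝ :=
  deriv (fun r => ∫ u in (0 : ℝ)..r, f (Φ y u)) 0

lemma flowRep_eq_of_weak {N : ℕ} {Φ : (Fin N → ℝ) → ℝ → (Fin N → ℝ)}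
    {μ : Measure (Fin N → ℝ)} [IsFiniteMeasureOnCompacts μ] (h : InvFlow Φ μ)
    {Ω : Set (Fin N → ℝ)} (hΩ : IsOpen Ω) {f g : (Fin N → ℝ) → ℝ}
    (hfm : Measurable f) (hgm : Measurable g)
    (hf : Integrable f μ) (hg : Integrable g μ)
    (hw : ∀ ψ Dψ, IsTestFun Ω Φ ψ Dψ → ∫ x, g x * ψ x ∂μ = ∫ x, f x * Dψ x ∂μ) :
    ∀ᵐ x ∂μ, x ∈ Ω → ∀ t ∈ lifeSpan Ω Φ x,
      flowRep Φ f (Φ x t) = f x - ∫ s in (0 : ℝ)..t, g (Φ x s) := by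
  filter_upwards [ae_ae_eq_of_weak h hΩ hfm hgm hf hg hw, h.ae_intervalIntegrable hg]
    with x hx hgi hxΩ t ht
  set c : ℝ → ℝ := fun t => f x - ∫ s in (0 : ℝ)..t, g (Φ x s) with hc
  have hcc : Continuous c := continuous_const.sub (intervalIntegral.continuous_primitive hgi 0)
  have hfc : ∀ᵐ u : ℝ, u ∈ lifeSpan Ω Φ x → f (Φ x u) = c u := by
    filter_upwards [hx] with u hu hul
    have := hu fun s hs => mem_of_lifeSpan (h.zero x) hxΩ (lifeSpan_of_mem_uIcc hul hs)
    simp only [hc, ← this]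
    ring
  have hfc' : ∀ᵐ u : ℝ, t + u ∈ lifeSpan Ω Φ x → f (Φ x (t + u)) = c (t + u) :=
    (measurePreserving_add_left volume t).quasiMeasurePreserving.ae hfc
  obtain ⟨ε, hε, hball⟩ := Metric.isOpen_iff.1 (isOpen_lifeSpan Ω Φ x) t ht
  have hev : (fun r => ∫ u in (0 : ℝ)..r, f (Φ (Φ x t) u))
      =ᶠ[𝓝 0] fun r => ∫ u in (0 : ℝ)..r, c (t + u) := by
    filter_upwards [Metric.ball_mem_nhds (0 : ℝ) hε] with r hr
    refine intervalIntegral.integral_congr_ae ?_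
    filter_upwards [hfc'] with u hu hur
    rw [h.add]
    refine hu (hball ?_)
    rw [Metric.mem_ball, Real.dist_eq, sub_zero] at hr
    rw [Metric.mem_ball, Real.dist_eq, add_sub_cancel_left]
    have := abs_sub_left_of_mem_uIcc (uIoc_subset_uIcc hur)
    simp only [sub_zero] at this
    exact this.trans_lt hr
  have hct : Continuous fun u => c (t + u) := hcc.comp (continuous_const.add continuous_id)
  rw [flowRep, hev.deriv_eq, (hct.integral_hasStrictDerivAt 0 0).hasDerivAt.deriv, add_zero]

/-- Changing `g` on a `μ`-null set does not affect the integrals of `g` along almost every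
trajectory. -/
lemma ae_curveIntegral_congr {N : ℕ} {Φ : (Fin N → ℝ) → ℝ → (Fin N → ℝ)}
    {μ : Measure (Fin N → ℝ)} [IsFiniteMeasureOnCompacts μ] (h : InvFlow Φ μ)
    {Ω : Set (Fin N → ℝ)} {g g' : (Fin N → ℝ) → ℝ} (hgg : ∀ᵐ x ∂μ, x ∈ Ω → g x = g' x) :
    ∀ᵐ x ∂μ, x ∈ Ω → ∀ t₁ t₂ : ℝ, t₁ ≤ t₂ →
      ENNReal.ofReal (-t₁) < tauM Ω Φ x → ENNReal.ofReal t₂ < tauP Ω Φ x →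
      ∫ s in t₁..t₂, g (Φ x s) = ∫ s in t₁..t₂, g' (Φ x s) := by
  filter_upwards [h.ae_ae hgg] with x hx hxΩ t₁ t₂ h12 h1 h2
  refine intervalIntegral.integral_congr_ae ?_
  filter_upwards [hx] with s hs hs12
  rw [uIoc_of_le h12] at hs12
  exact hs (mem_of_lifeSpan (h.zero x) hxΩ (lifeSpan_of_mem_Icc h1 h2 (Ioc_subset_Icc_self hs12)))

/-! ### From the representative to the weak equation -/

lemma integral_by_parts_aux {δ C v₀ : ℝ} {g u u' v : ℝ → ℝ} (hδ : 0 ≤ δ)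
    (hg : IntervalIntegrable g volume 0 δ)
    (hu : ∀ t ∈ Icc 0 δ, HasDerivAt u (u' t) t) (hC : ∀ t, |u' t| ≤ C)
    (hv : ∀ᵐ t : ℝ, t ∈ Icc 0 δ → v t = v₀ - ∫ s in (0 : ℝ)..t, g s) :
    ∫ t in (0 : ℝ)..δ, (g t * u t - v t * u' t)
      = v₀ * u 0 - (v₀ - ∫ s in (0 : ℝ)..δ, g s) * u δ := by
  set V : ℝ → ℝ := fun t => v₀ - ∫ s in (0 : ℝ)..t, g s with hV
  have hVac : AbsolutelyContinuousOnInterval V 0 δ := by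
    have h1 := hg.absolutelyContinuousOnInterval_intervalIntegral (c := 0) left_mem_uIcc
    have h2 : AbsolutelyContinuousOnInterval (fun _ : ℝ => v₀) 0 δ :=
      (LipschitzWith.const v₀).lipschitzOnWith.absolutelyContinuousOnInterval
    exact h2.sub h1
  have huac : AbsolutelyContinuousOnInterval u 0 δ := by
    refine LipschitzOnWith.absolutelyContinuousOnInterval (K := C.toNNReal) ?_
    rw [uIcc_of_le hδ]
    refine (convex_Icc 0 δ).lipschitzOnWith_of_nnnorm_hasDerivWithin_le
      (fun t ht => (hu t ht).hasDerivWithinAt) fun t _ => ?_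
    rw [← NNReal.coe_le_coe, coe_nnnorm, Real.norm_eq_abs]
    exact (hC t).trans (Real.le_coe_toNNReal C)
  have key := hVac.integral_deriv_mul_eq_sub huac
  have h0 : V 0 = v₀ := by simp [hV]
  have hd : ∀ᵐ t : ℝ, t ∈ uIcc 0 δ → deriv V t = - g t := by
    filter_upwards [hg.ae_hasDerivAt_integral] with t ht htm
    have := ((ht htm 0 left_mem_uIcc).const_sub v₀).deriv
    exact this
  have hint : ∫ t in (0 : ℝ)..δ, (g t * u t - v t * u' t)
      = ∫ t in (0 : ℝ)..δ, -(deriv V t * u t + V t * deriv u t) := by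
    refine intervalIntegral.integral_congr_ae ?_
    filter_upwards [hd, hv] with t h1 h2 ht
    have ht' := uIoc_subset_uIcc ht
    have ht'' : t ∈ Icc 0 δ := by rwa [uIcc_of_le hδ] at ht'
    rw [h1 ht', h2 ht'', (hu t ht'').deriv]
    ring
  rw [hint, intervalIntegral.integral_neg, key, h0]
  ring

/-- A compact subset of `Ω` needs a uniform positive time to leave `Ω`. -/
lemma exists_uniform_time {N : ℕ} {Φ : (Fin N → ℝ) → ℝ → (Fin N → ℝ)}
    {μ : Measure (Fin N → ℝ)} (h : InvFlow Φ μ) {Ω K : Set (Fin N → ℝ)} (hΩ : IsOpen Ω)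
    (hK : IsCompact K) (hKΩ : K ⊆ Ω) :
    ∃ δ > 0, ∀ y ∈ K, ∀ s : ℝ, |s| < δ → Φ y s ∈ Ω := by
  have : ∀ᶠ s in 𝓝 (0 : ℝ), ∀ y ∈ K, Φ y s ∈ Ω := by
    refine hK.eventually_forall_of_forall_eventually fun y hy => ?_
    have hc : Continuous fun z : ℝ × (Fin N → ℝ) => Φ z.2 z.1 := h.cont.comp continuous_swap
    exact hc.continuousAt.eventually (hΩ.mem_nhds (by simpa [h.zero] using hKΩ hy))
  obtain ⟨δ, hδ, hs⟩ := Metric.eventually_nhds_iff.1 this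
  exact ⟨δ, hδ, fun y hy s hsδ => hs (by simpa using hsδ) y hy⟩

/-- If the trajectory of `x` stays in `Ω` on `(a, b)`, where `a ≤ 0 ≤ b`, the exit times are at
least `b` and `-a`. -/
lemma le_tau {N : ℕ} {Φ : (Fin N → ℝ) → ℝ → (Fin N → ℝ)} {Ω : Set (Fin N → ℝ)}
    {x : Fin N → ℝ} {a b : ℝ} (ha : a ≤ 0) (hb : 0 ≤ b) (hs : ∀ s ∈ Ioo a b, Φ x s ∈ Ω) :
    ENNReal.ofReal b ≤ tauP Ω Φ x ∧ ENNReal.ofReal (-a) ≤ tauM Ω Φ x := by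
  constructor
  · refine le_sInf ?_
    rintro _ ⟨r, hr, rfl, hne⟩
    refine ENNReal.ofReal_le_ofReal (not_lt.1 fun hlt => hne (hs r ⟨by linarith, hlt⟩))
  · refine le_sInf ?_
    rintro _ ⟨r, hr, rfl, hne⟩
    refine ENNReal.ofReal_le_ofReal
      (not_lt.1 fun hlt => hne (hs (-r) ⟨by linarith, by linarith⟩))

/-- Integrating the product rule for `f♯ ψ` along trajectories over a short time `δ`, and then over
space: by invariance of `μ` the boundary terms cancel. -/
lemma weak_of_rep {N : ℕ} {Φ : (Fin N → ℝ) → ℝ → (Fin N → ℝ)}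
    {μ : Measure (Fin N → ℝ)} [IsFiniteMeasureOnCompacts μ] (h : InvFlow Φ μ)
    {Ω : Set (Fin N → ℝ)} (hΩ : IsOpen Ω) {f g fs : (Fin N → ℝ) → ℝ}
    (hf : Integrable f μ) (hg : Integrable g μ) (hf0 : ∀ x ∉ Ω, f x = 0)
    (hfs : ∀ᵐ x ∂μ, x ∈ Ω → fs x = f x)
    (hrep : ∀ᵐ x ∂μ, x ∈ Ω → ∀ t₁ t₂ : ℝ, t₁ ≤ t₂ →
      ENNReal.ofReal (-t₁) < tauM Ω Φ x → ENNReal.ofReal t₂ < tauP Ω Φ x →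
      fs (Φ x t₁) - fs (Φ x t₂) = ∫ s in t₁..t₂, g (Φ x s))
    {ψ Dψ : (Fin N → ℝ) → ℝ} (hψ : IsTestFun Ω Φ ψ Dψ) :
    ∫ x, g x * ψ x ∂μ = ∫ x, f x * Dψ x ∂μ := by
  obtain ⟨C, hC⟩ := hψ.bounded
  obtain ⟨C', hC'⟩ := hψ.boundedD
  obtain ⟨K, hK, hKΩ, hK0⟩ := hψ.compact_support
  obtain ⟨η, hη, hKη⟩ := exists_uniform_time h hΩ hK hKΩ
  set δ : ℝ := η / 3 with hδdef
  have hδ : 0 < δ := by positivity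
  have ifψ : Integrable (fun x => f x * ψ x) μ :=
    hf.mul_bdd hψ.measurable.aestronglyMeasurable (Eventually.of_forall hC)
  have ifD : Integrable (fun x => f x * Dψ x) μ :=
    hf.mul_bdd hψ.measurableD.aestronglyMeasurable (Eventually.of_forall hC')
  have igψ : Integrable (fun x => g x * ψ x) μ :=
    hg.mul_bdd hψ.measurable.aestronglyMeasurable (Eventually.of_forall hC)
  -- `Dψ` vanishes on `Ω \ K` since `ψ` vanishes along the trajectory for small times
  have hfD0 : ∀ y ∉ K, f y * Dψ y = 0 := by
    intro y hy
    by_cases hyΩ : y ∈ Ω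
    · have hev : (fun s => ψ (Φ y s)) =ᶠ[𝓝 0] fun _ => 0 := by
        have hmem : Φ y 0 ∈ Kᶜ := by rwa [h.zero]
        filter_upwards [(h.continuous_right y).continuousAt.eventually
          (hK.isClosed.isOpen_compl.mem_nhds hmem)] with s hs
        exact hK0 _ hs
      have hd := (hψ.hasDeriv y hyΩ).deriv
      rw [hev.deriv_eq, deriv_const] at hd
      rw [← hd, mul_zero]
    · rw [hf0 y hyΩ, zero_mul]
  set w : (Fin N → ℝ) → ℝ := fun x => g x * ψ x - f x * Dψ x with hw
  have iw : Integrable w μ := igψ.sub ifD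
  have hcurve : ∀ᵐ x ∂μ, ∫ s in (0 : ℝ)..δ, w (Φ x s)
      = f x * ψ x - f (Φ x δ) * ψ (Φ x δ) := by
    filter_upwards [hrep, hfs, h.ae_ae hfs,
      (h.mp δ).quasiMeasurePreserving.ae hfs, h.ae_intervalIntegrable hg]
      with x hx hfx hfs_s hfδ hgi
    by_cases hhit : ∃ s ∈ Icc 0 δ, Φ x s ∈ K
    · obtain ⟨s₀, hs₀, hsK⟩ := hhit
      have hin : ∀ s ∈ Ioo (-δ) (2 * δ), Φ x s ∈ Ω := by
        intro s hs
        have := hKη _ hsK (s - s₀) (by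
          rw [abs_lt]
          constructor <;> linarith [hs.1, hs.2, hs₀.1, hs₀.2])
        rwa [h.add, add_sub_cancel] at this
      obtain ⟨hP, hM⟩ := le_tau (by linarith) (by linarith) hin
      have hP' : ∀ t ≤ δ, ENNReal.ofReal t < tauP Ω Φ x := fun t ht =>
        lt_of_lt_of_le ((ENNReal.ofReal_lt_ofReal_iff (by linarith)).2 (by linarith)) hP
      have hM' : ENNReal.ofReal (-0) < tauM Ω Φ x :=
        lt_of_lt_of_le ((ENNReal.ofReal_lt_ofReal_iff (by linarith)).2 (by linarith)) hM
      have hxΩ : x ∈ Ω := by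
        have := hin 0 ⟨by linarith, by linarith⟩
        rwa [h.zero] at this
      have hform : ∀ t ∈ Icc 0 δ, fs (Φ x t) = f x - ∫ s in (0 : ℝ)..t, g (Φ x s) := by
        intro t ht
        rw [← hx hxΩ 0 t ht.1 hM' (hP' t ht.2), h.zero, hfx hxΩ]
        ring
      have hΩs : ∀ t ∈ Icc 0 δ, Φ x t ∈ Ω := fun t ht =>
        hin t ⟨by linarith [ht.1], by linarith [ht.2]⟩
      have key := integral_by_parts_aux (g := fun s => g (Φ x s)) (u := fun s => ψ (Φ x s))
        (u' := fun s => Dψ (Φ x s)) (v := fun s => f (Φ x s)) (v₀ := f x) hδ.le (hgi 0 δ)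
        (fun t ht => by
          have := hψ.hasDeriv _ (hΩs t ht)
          simp only [h.add] at this
          have h2 := HasDerivAt.comp_sub_const (f := fun s => ψ (Φ x (t + s))) t t
            (by simpa using this)
          simpa using h2)
        (fun t => hC' _)
        (by
          filter_upwards [hfs_s] with t ht htm
          rw [← ht (hΩs t htm), hform t htm])
      have hδmem : δ ∈ Icc 0 δ := ⟨hδ.le, le_rfl⟩
      simp only [h.zero] at key
      rw [← hform δ hδmem, hfδ (hΩs δ hδmem)] at key
      exact key
    · push Not at hhit
      have h0 : ∀ s ∈ Icc 0 δ, ψ (Φ x s) = 0 := fun s hs => hK0 _ (hhit s hs)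
      have hint : ∫ s in (0 : ℝ)..δ, w (Φ x s) = 0 := by
        rw [intervalIntegral.integral_congr (g := fun _ => 0), intervalIntegral.integral_zero]
        intro s hs
        rw [uIcc_of_le hδ.le] at hs
        simp only [hw, h0 s hs, hfD0 _ (hhit s hs), mul_zero, sub_zero]
      have h1 := h0 0 ⟨le_rfl, hδ.le⟩
      rw [h.zero] at h1
      rw [hint, h1, h0 δ ⟨hδ.le, le_rfl⟩]
      ring
  have hlhs : ∫ x, (∫ s in (0 : ℝ)..δ, w (Φ x s)) ∂μ = δ * ∫ x, w x ∂μ := by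
    have := isFiniteMeasure_uIoc δ
    rw [← intervalIntegral_integral_swap (f := fun s x => w (Φ x s))
      (h.integrable_skew (volume.restrict (uIoc 0 δ)) iw)]
    simp only [h.integral_comp _ w]
    simp
  have hrhs : ∫ x, (f x * ψ x - f (Φ x δ) * ψ (Φ x δ)) ∂μ = 0 := by
    have hi : Integrable (fun x => f (Φ x δ) * ψ (Φ x δ)) μ :=
      ((h.mp δ).integrable_comp ifψ.aestronglyMeasurable).2 ifψ
    rw [integral_sub ifψ hi, h.integral_comp δ (fun x => f x * ψ x), sub_self]
  rw [integral_congr_ae hcurve, hrhs] at hlhs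
  have hw0 : ∫ x, w x ∂μ = 0 := (mul_eq_zero.1 hlhs.symm).resolve_left hδ.ne'
  simp only [hw] at hw0
  rw [integral_sub igψ ifD] at hw0
  linarith

/-! ### The equivalence -/

theorem stmt_15
    {N : ℕ} (hN : 1 ≤ N) (κ : ℝ≥0) (hκ : 0 < κ)
    (F : (Fin N → ℝ) → (Fin N → ℝ)) (hF : LipschitzWith κ F)
    (Φ : (Fin N → ℝ) → ℝ → (Fin N → ℝ))
    (hΦ0 : ∀ x, Φ x 0 = x)
    (hΦ' : ∀ x s, HasDerivAt (Φ x) (F (Φ x s)) s)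
    (Ω : Set (Fin N → ℝ)) (hΩ : IsOpen Ω)
    (μ : Measure (Fin N → ℝ)) [IsFiniteMeasureOnCompacts μ]
    (hinv : ∀ (A : Set (Fin N → ℝ)) (t : ℝ), MeasurableSet A →
      μ ((fun x => Φ x t) '' A) = μ A)
    (f : (Fin N → ℝ) → ℝ) (hf : Integrable f (μ.restrict Ω)) :
    ∀ g : (Fin N → ℝ) → ℝ,
      (Integrable g (μ.restrict Ω) ∧
        ∃ fs : (Fin N → ℝ) → ℝ, fs =ᵐ[μ.restrict Ω] f ∧
          ∀ᵐ x ∂μ.restrict Ω, ∀ t₁ t₂ : ℝ, t₁ ≤ t₂ →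
            ENNReal.ofReal (-t₁) < tauM Ω Φ x → ENNReal.ofReal t₂ < tauP Ω Φ x →
            fs (Φ x t₁) - fs (Φ x t₂) = ∫ s in t₁..t₂, g (Φ x s))
      ↔ InDomTmax Ω Φ μ f g := by
  intro g
  have h : InvFlow Φ μ := invFlow_of_ode hF hΦ0 hΦ' hinv
  have hrepr : ∀ u : (Fin N → ℝ) → ℝ, Integrable u (μ.restrict Ω) →
      ∃ u' : (Fin N → ℝ) → ℝ, Measurable u' ∧ Integrable u' μ ∧ (∀ x ∉ Ω, u' x = 0) ∧
        ∀ᵐ x ∂μ, x ∈ Ω → u x = u' x := by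
    intro u hu
    have hm := hu.1.stronglyMeasurable_mk.measurable
    refine ⟨Ω.indicator (hu.1.mk u), hm.indicator hΩ.measurableSet, ?_,
      fun x hx => indicator_of_notMem hx _, ?_⟩
    · exact (integrable_indicator_iff hΩ.measurableSet).2 (hu.congr hu.1.ae_eq_mk)
    · filter_upwards [(ae_restrict_iff' hΩ.measurableSet).1 hu.1.ae_eq_mk] with x hx hxΩ
      rw [indicator_of_mem hxΩ, hx hxΩ]
  have hint : ∀ u u' v : (Fin N → ℝ) → ℝ, (∀ x ∉ Ω, u' x = 0) →
      (∀ᵐ x ∂μ, x ∈ Ω → u x = u' x) → ∫ x in Ω, u x * v x ∂μ = ∫ x, u' x * v x ∂μ := by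
    intro u u' v h0 hae
    rw [← setIntegral_eq_integral_of_forall_compl_eq_zero (s := Ω) (f := fun x => u' x * v x)
      (fun x hx => by rw [h0 x hx, zero_mul])]
    refine setIntegral_congr_ae hΩ.measurableSet ?_
    filter_upwards [hae] with x hx hxΩ
    rw [hx hxΩ]
  obtain ⟨f', hfm, hfi, hf0, hff⟩ := hrepr f hf
  constructor
  · rintro ⟨hg, fs, hfs, hrep⟩
    refine ⟨hf, hg, fun ψ Dψ hψ => ?_⟩
    obtain ⟨g', -, hgi, hg0, hgg⟩ := hrepr g hg
    rw [hint g g' ψ hg0 hgg, hint f f' Dψ hf0 hff]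
    refine weak_of_rep (fs := fs) h hΩ hfi hgi hf0 ?_ ?_ hψ
    · filter_upwards [(ae_restrict_iff' hΩ.measurableSet).1 hfs, hff] with x h1 h2 hxΩ
      rw [h1 hxΩ, h2 hxΩ]
    · filter_upwards [(ae_restrict_iff' hΩ.measurableSet).1 hrep, ae_curveIntegral_congr h hgg]
        with x h1 h2 hxΩ t₁ t₂ h12 ht₁ ht₂
      rw [h1 hxΩ t₁ t₂ h12 ht₁ ht₂, h2 hxΩ t₁ t₂ h12 ht₁ ht₂]
  · rintro ⟨-, hg, hweak⟩
    obtain ⟨g', hgm, hgi, hg0, hgg⟩ := hrepr g hg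
    have hrep := flowRep_eq_of_weak h hΩ hfm hgm hfi hgi fun ψ Dψ hψ => by
      rw [← hint g g' ψ hg0 hgg, ← hint f f' Dψ hf0 hff, hweak ψ Dψ hψ]
    refine ⟨hg, flowRep Φ f', ?_, ?_⟩
    · refine (ae_restrict_iff' hΩ.measurableSet).2 ?_
      filter_upwards [hrep, hff] with x h1 h2 hxΩ
      obtain ⟨ε, hε, hεΩ⟩ := exists_uniform_time h hΩ isCompact_singleton
        (singleton_subset_iff.2 hxΩ)
      obtain ⟨hP, hM⟩ := le_tau (Φ := Φ) (Ω := Ω) (x := x) (a := -ε) (b := ε)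
        (by linarith) hε.le fun s hs => hεΩ x rfl s (abs_lt.2 hs)
      have h0 : (0 : ℝ) ∈ lifeSpan Ω Φ x := by
        constructor
        · exact lt_of_lt_of_le ((ENNReal.ofReal_lt_ofReal_iff hε).2 hε) hP
        · refine lt_of_lt_of_le ((ENNReal.ofReal_lt_ofReal_iff ?_).2 ?_) hM <;> linarith
      have := h1 hxΩ 0 h0
      rw [h.zero, intervalIntegral.integral_same, sub_zero] at this
      rw [this, h2 hxΩ]
    · refine (ae_restrict_iff' hΩ.measurableSet).2 ?_
      filter_upwards [hrep, ae_curveIntegral_congr h hgg, h.ae_intervalIntegrable hgi]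
        with x h1 h2 h3 hxΩ t₁ t₂ h12 ht₁ ht₂
      rw [h2 hxΩ t₁ t₂ h12 ht₁ ht₂,
        h1 hxΩ t₁ (lifeSpan_of_mem_Icc ht₁ ht₂ ⟨le_rfl, h12⟩),
        h1 hxΩ t₂ (lifeSpan_of_mem_Icc ht₁ ht₂ ⟨h12, le_rfl⟩),
        ← intervalIntegral.integral_interval_sub_left (h3 0 t₂) (h3 0 t₁)]
      ring

end
end
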